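/- Let m ∈ ℕ and let f be any of the following derivation modes: t; =k'' or ≥k'' for some k'' ≥ m; (≥k''∧≤k') for some k' ≥ k'' ≥ m; or (t∧=k), (t∧≤k), (t∧≥k) for an arbitrary k ∈ ℕ. Then the family of programmed languages of index at most m equals the family of languages of index at most m generated by CD grammar systems (with arbitrarily many context-free components) all of whose components work in mode f: L_m(P, CF[−λ]) = L_m(CD_∞, CF[−λ], f), both with and without erasing rules. -/

import Mathlib

namespace CDHybrid

/-- Symbols: nonterminals are natural numbers, terminals come from `T`. -/
abbrev Symb (T : Type) := ℕ ⊕ T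

/-- Sentential forms. -/
abbrev SForm (T : Type) := List (Symb T)

/-- A context-free rule `A → z`. -/
abbrev Rule (T : Type) := ℕ × SForm T

/-- Number of nonterminal occurrences in a sentential form. -/
def ntCount {T : Type} (x : SForm T) : ℕ := (x.filter Sum.isLeft).length

/-- One rewriting step using some rule of the rule set `P`. -/
def RStep {T : Type} (P : List (Rule T)) (x y : SForm T) : Prop :=
  ∃ r ∈ P, ∃ u v : SForm T, x = u ++ Sum.inl r.1 :: v ∧ y = u ++ r.2 ++ v

/-- `m`-step derivation using only rules of `P`. -/
def StepsN {T : Type} (P : List (Rule T)) : ℕ → SForm T → SForm T → Prop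
  | 0, x, y => x = y
  | m + 1, x, y => ∃ z, RStep P x z ∧ StepsN P m z y

/-- `m`-step derivation using only rules of `P`, all intermediate (and the final)
sentential forms having at most `b` occurrences of nonterminals. -/
def StepsNB {T : Type} (P : List (Rule T)) (b : ℕ) : ℕ → SForm T → SForm T → Prop
  | 0, x, y => x = y
  | m + 1, x, y => ∃ z, RStep P x z ∧ ntCount z ≤ b ∧ StepsNB P b m z y

/-- Derivation modes of CD grammar systems. -/
inductive Mode where
  | eq : ℕ → Mode
  | le : ℕ → Mode
  | ge : ℕ → Mode
  | star : Mode
  | t : Mode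
  | conj : Mode → Mode → Mode

/-- The predicate of a derivation mode: `modeOK P f m y` holds if an `m`-step
derivation by the component `P` ending in `y` is acceptable for mode `f`. -/
def modeOK {T : Type} (P : List (Rule T)) : Mode → ℕ → SForm T → Prop
  | .eq k, m, _ => m = k
  | .le k, m, _ => m ≤ k
  | .ge k, m, _ => k ≤ m
  | .star, _, _ => True
  | .t, _, y => ¬ ∃ z, RStep P y z
  | .conj f g, m, y => modeOK P f m y ∧ modeOK P g m y

/-- A CD grammar system with context-free components. -/
structure CDGS (T : Type) where
  deg : ℕ
  start : ℕ
  comp : Fin deg → List (Rule T)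

/-- λ-freeness: no erasing rules. -/
def CDGS.LamFree {T : Type} (G : CDGS T) : Prop :=
  ∀ i : Fin G.deg, ∀ r ∈ G.comp i, r.2 ≠ []

/-- One derivation step of a component of `G` in mode `f`. -/
def CDGS.ModeStep {T : Type} (G : CDGS T) (f : Mode) (x y : SForm T) : Prop :=
  ∃ i : Fin G.deg, ∃ m : ℕ, StepsN (G.comp i) m x y ∧ modeOK (G.comp i) f m y

/-- One derivation step of a component of `G` in mode `f`, with all produced
sentential forms having at most `b` nonterminal occurrences. -/
def CDGS.ModeStepB {T : Type} (G : CDGS T) (f : Mode) (b : ℕ) (x y : SForm T) : Prop :=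
  ∃ i : Fin G.deg, ∃ m : ℕ, StepsNB (G.comp i) b m x y ∧ modeOK (G.comp i) f m y

/-- The language generated by `G` in mode `f`. -/
def CDGS.lang {T : Type} (G : CDGS T) (f : Mode) : Set (List T) :=
  { w | Relation.TransGen (G.ModeStep f) [Sum.inl G.start] (w.map Sum.inr) }

/-- The words of the language of `G` in mode `f` possessing a derivation of index
at most `b`, i.e., all sentential forms occurring in it have at most `b`
nonterminal occurrences. -/
def CDGS.langB {T : Type} (G : CDGS T) (f : Mode) (b : ℕ) : Set (List T) :=
  { w | ntCount ([Sum.inl G.start] : SForm T) ≤ b ∧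
      Relation.TransGen (G.ModeStepB f b) [Sum.inl G.start] (w.map Sum.inr) }

/-- Two languages are considered equal iff they differ at most in the empty word. -/
def EqL {T : Type} (L₁ L₂ : Set (List T)) : Prop := L₁ \ {[]} = L₂ \ {[]}

/-- The family `L(CD_n, CF[−λ], f)`; `lf = true` forbids erasing rules. -/
def CDFam (T : Type) (lf : Bool) (n : ℕ) (f : Mode) : Set (Set (List T)) :=
  { L | ∃ G : CDGS T, G.deg ≤ n ∧ (lf = true → G.LamFree) ∧ EqL (G.lang f) L }

/-- The family `L(CD_∞, CF[−λ], f)`. -/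
def CDFamInf (T : Type) (lf : Bool) (f : Mode) : Set (Set (List T)) :=
  { L | ∃ G : CDGS T, (lf = true → G.LamFree) ∧ EqL (G.lang f) L }

/-- The family `L_m(CD_n, CF[−λ], f)` of such languages of index at most `m`. -/
def CDFamInd (T : Type) (lf : Bool) (n : ℕ) (f : Mode) (m : ℕ) : Set (Set (List T)) :=
  { L | ∃ G : CDGS T, G.deg ≤ n ∧ (lf = true → G.LamFree) ∧ EqL (G.lang f) L ∧
      G.lang f ⊆ G.langB f m }

/-- The family `L_m(CD_∞, CF[−λ], f)`. -/
def CDFamIndInf (T : Type) (lf : Bool) (f : Mode) (m : ℕ) : Set (Set (List T)) :=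
  { L | ∃ G : CDGS T, (lf = true → G.LamFree) ∧ EqL (G.lang f) L ∧ G.lang f ⊆ G.langB f m }

/-- The family `L_fin(CD_∞, CF[−λ], f)`. -/
def CDFamFinInf (T : Type) (lf : Bool) (f : Mode) : Set (Set (List T)) :=
  { L | ∃ m : ℕ, 1 ≤ m ∧ L ∈ CDFamIndInf T lf f m }

/-- A context-free grammar. -/
structure CFG (T : Type) where
  start : ℕ
  rules : List (Rule T)

/-- The language generated by a context-free grammar. -/
def CFG.lang {T : Type} (G : CFG T) : Set (List T) :=
  { w | Relation.ReflTransGen (RStep G.rules) [Sum.inl G.start] (w.map Sum.inr) }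

/-- The words of `G.lang` having a derivation of index at most `m`. -/
def CFG.langB {T : Type} (G : CFG T) (m : ℕ) : Set (List T) :=
  { w | ntCount ([Sum.inl G.start] : SForm T) ≤ m ∧
      Relation.ReflTransGen (fun x y => RStep G.rules x y ∧ ntCount y ≤ m)
        [Sum.inl G.start] (w.map Sum.inr) }

/-- The family `L(CF)` of context-free languages. -/
def CFFam (T : Type) : Set (Set (List T)) := { L | ∃ G : CFG T, EqL G.lang L }

/-- The family `L_m(CF)` of context-free languages of index at most `m`. -/
def CFFamInd (T : Type) (m : ℕ) : Set (Set (List T)) :=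
  { L | ∃ G : CFG T, EqL G.lang L ∧ G.lang ⊆ G.langB m }

/-- The family `L_fin(CF)` of context-free languages of finite index. -/
def CFFamFin (T : Type) : Set (Set (List T)) :=
  { L | ∃ m : ℕ, 1 ≤ m ∧ L ∈ CFFamInd T m }

/-- A grammar is linear if every right-hand side contains at most one nonterminal. -/
def CFG.Linear {T : Type} (G : CFG T) : Prop := ∀ r ∈ G.rules, ntCount r.2 ≤ 1

/-- The family `L(LIN)` of linear context-free languages. -/
def LinFam (T : Type) : Set (Set (List T)) :=
  { L | ∃ G : CFG T, G.Linear ∧ EqL G.lang L }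

/-- The family `L(FIN)` of finite languages. -/
def FinFam (T : Type) : Set (Set (List T)) := { L | L.Finite }

/-- A programmed grammar with context-free rules. -/
structure PG (T : Type) where
  start : ℕ
  nLab : ℕ
  rule : Fin nLab → Rule T
  succ : Fin nLab → Set (Fin nLab)
  fail : Fin nLab → Set (Fin nLab)

def PG.LamFree {T : Type} (G : PG T) : Prop := ∀ r : Fin G.nLab, (G.rule r).2 ≠ []

/-- No appearance checking: all failure fields are empty. -/
def PG.NoAC {T : Type} (G : PG T) : Prop := ∀ r : Fin G.nLab, G.fail r = ∅

/-- One step of a programmed grammar on pairs (sentential form, label). -/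
def PG.PStep {T : Type} (G : PG T) (p q : SForm T × Fin G.nLab) : Prop :=
  (∃ u v : SForm T, p.1 = u ++ Sum.inl (G.rule p.2).1 :: v ∧
      q.1 = u ++ (G.rule p.2).2 ++ v ∧ q.2 ∈ G.succ p.2) ∨
  (Sum.inl (G.rule p.2).1 ∉ p.1 ∧ q.1 = p.1 ∧ q.2 ∈ G.fail p.2)

/-- The language generated by a programmed grammar. -/
def PG.lang {T : Type} (G : PG T) : Set (List T) :=
  { w | ∃ r₁ r₂ : Fin G.nLab,
      Relation.ReflTransGen G.PStep ([Sum.inl G.start], r₁) (w.map Sum.inr, r₂) }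

/-- The words of `G.lang` having a derivation of index at most `m`. -/
def PG.langB {T : Type} (G : PG T) (m : ℕ) : Set (List T) :=
  { w | ∃ r₁ r₂ : Fin G.nLab, ntCount ([Sum.inl G.start] : SForm T) ≤ m ∧
      Relation.ReflTransGen (fun p q => G.PStep p q ∧ ntCount q.1 ≤ m)
        ([Sum.inl G.start], r₁) (w.map Sum.inr, r₂) }

/-- The family `L_m(P, CF[−λ][, ac])`: programmed languages of index at most `m`;
`ac = false` forbids appearance checking, `lf = true` forbids erasing rules. -/
def PFamInd (T : Type) (lf ac : Bool) (m : ℕ) : Set (Set (List T)) :=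
  { L | ∃ G : PG T, (lf = true → G.LamFree) ∧ (ac = false → G.NoAC) ∧
      EqL G.lang L ∧ G.lang ⊆ G.langB m }

/-- The family `L_fin(P, CF[−λ][, ac])` of programmed languages of finite index. -/
def PFamFin (T : Type) (lf ac : Bool) : Set (Set (List T)) :=
  { L | ∃ m : ℕ, 1 ≤ m ∧ L ∈ PFamInd T lf ac m }


section aux
open Relation

def nts (x : SForm ℕ) : List ℕ := x.filterMap Sum.getLeft?

@[simp] lemma nts_nil : nts [] = [] := rfl
@[simp] lemma nts_inl (a : ℕ) (x : SForm ℕ) : nts (Sum.inl a :: x) = a :: nts x := rfl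
@[simp] lemma nts_inr (a : ℕ) (x : SForm ℕ) : nts (Sum.inr a :: x) = nts x := rfl
@[simp] lemma nts_append (x y : SForm ℕ) : nts (x ++ y) = nts x ++ nts y := by simp [nts]

lemma ntCount_eq (x : SForm ℕ) : ntCount x = (nts x).length := by
  induction x with
  | nil => rfl
  | cons a x ih =>
    cases a with
    | inl a =>
      have : ntCount (Sum.inl a :: x : SForm ℕ) = ntCount x + 1 := rfl
      rw [this, ih]; rfl
    | inr a =>
      have : ntCount (Sum.inr a :: x : SForm ℕ) = ntCount x := rfl
      rw [this, ih]; rfl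

lemma mem_nts {a : ℕ} {x : SForm ℕ} : a ∈ nts x ↔ Sum.inl a ∈ x := by
  induction x with
  | nil => simp
  | cons b x ih => cases b <;> simp_all

@[simp] lemma nts_term (w : List ℕ) : nts (w.map Sum.inr) = [] := by
  induction w with
  | nil => rfl
  | cons a w ih => simpa using ih

def ren (g : ℕ → ℕ) (x : SForm ℕ) : SForm ℕ := x.map (Sum.map g id)

@[simp] lemma ren_nil (g) : ren g [] = [] := rfl
@[simp] lemma ren_append (g) (x y : SForm ℕ) : ren g (x ++ y) = ren g x ++ ren g y := by simp [ren]
@[simp] lemma ren_inl (g) (a) (y : SForm ℕ) :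
    ren g (Sum.inl a :: y) = Sum.inl (g a) :: ren g y := by simp [ren]
@[simp] lemma ren_inr (g) (a) (y : SForm ℕ) :
    ren g (Sum.inr a :: y) = Sum.inr a :: ren g y := by simp [ren]
@[simp] lemma ren_term (g) (w : List ℕ) : ren g (w.map Sum.inr) = w.map Sum.inr := by
  simp [ren]
lemma nts_ren (g) (x : SForm ℕ) : nts (ren g x) = (nts x).map g := by
  induction x with
  | nil => rfl
  | cons b x ih => cases b <;> simp_all

lemma ren_ren (g h) (x : SForm ℕ) : ren g (ren h x) = ren (g ∘ h) x := by
  induction x with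
  | nil => rfl
  | cons b x ih => cases b <;> simp_all

lemma ren_congr {g h : ℕ → ℕ} {x : SForm ℕ} (H : ∀ a ∈ nts x, g a = h a) : ren g x = ren h x := by
  induction x with
  | nil => rfl
  | cons b x ih => cases b <;> simp_all

lemma ren_id' {g : ℕ → ℕ} {x : SForm ℕ} (H : ∀ a ∈ nts x, g a = a) : ren g x = x := by
  induction x with
  | nil => rfl
  | cons b x ih => cases b <;> simp_all

lemma ren_eq_split {g} {x u v : SForm ℕ} {b : ℕ} (h : ren g x = u ++ Sum.inl b :: v) :
    ∃ u0 a v0, x = u0 ++ Sum.inl a :: v0 ∧ ren g u0 = u ∧ g a = b ∧ ren g v0 = v := by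
  unfold ren at h
  rw [List.map_eq_append_iff] at h
  obtain ⟨u0, t, rfl, rfl, h⟩ := h
  rw [List.map_eq_cons_iff] at h
  obtain ⟨c, v0, rfl, hc, rfl⟩ := h
  cases c with
  | inl a => exact ⟨u0, a, v0, rfl, rfl, by simpa using hc, rfl⟩
  | inr a => simp at hc

lemma ren_eq_term {g} {x : SForm ℕ} {w : List ℕ} (h : ren g x = w.map Sum.inr) :
    x = w.map Sum.inr := by
  rw [← h]; symm; apply ren_id'
  intro a ha
  have : g a ∈ nts (ren g x) := by rw [nts_ren]; exact List.mem_map_of_mem ha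
  rw [h] at this; simp at this

lemma split_unique {l1 l2 l1' l2' : List ℕ} {p : ℕ} (hn : (l1 ++ p :: l2).Nodup)
    (h : l1 ++ p :: l2 = l1' ++ p :: l2') : l1 = l1' ∧ l2 = l2' := by
  induction l1 generalizing l1' with
  | nil =>
    cases l1' with
    | nil => simpa using h
    | cons b l1' =>
      simp at h
      obtain ⟨rfl, rfl⟩ := h
      simp at hn
  | cons a l1 ih =>
    cases l1' with
    | nil =>
      simp at h
      obtain ⟨rfl, rfl⟩ := h
      simp at hn
    | cons b l1' =>
      simp at h
      obtain ⟨rfl, h⟩ := h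
      have := ih (by simp at hn; simpa using hn.2) h
      simp [this]

lemma start_ne_term {S : ℕ} {w : List ℕ} : ([Sum.inl S] : SForm ℕ) ≠ w.map Sum.inr := by
  intro h
  have := congrArg nts h
  simp at this

/-! ### Skeleton systems -/

abbrev SR (St : Type) := St × ℕ × SForm ℕ × St

structure SK (St : Type) where
  R : List (SR St)
  sk : St → List ℕ
  s0 : St
  S : ℕ

structure SK.WF {St : Type} (G : SK St) (lf : Bool) (m : ℕ) : Prop where
  start : G.sk G.s0 = [G.S]
  rule : ∀ r ∈ G.R, ∃ l1 l2, G.sk r.1 = l1 ++ r.2.1 :: l2 ∧ G.sk r.2.2.2 = l1 ++ nts r.2.2.1 ++ l2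
  nds : ∀ r ∈ G.R, (G.sk r.1).Nodup
  ndd : ∀ r ∈ G.R, (G.sk r.2.2.2).Nodup
  lens : ∀ r ∈ G.R, (G.sk r.1).length ≤ m
  lend : ∀ r ∈ G.R, (G.sk r.2.2.2).length ≤ m
  pf : ∀ r ∈ G.R, r.2.1 ∉ G.sk r.2.2.2
  lamf : lf = true → ∀ r ∈ G.R, r.2.2.1 ≠ []
  pS : ∀ r ∈ G.R, r.2.1 = G.S → r.1 = G.s0

def SK.Step {St : Type} (G : SK St) (c d : St × SForm ℕ) : Prop :=
  ∃ r ∈ G.R, r.1 = c.1 ∧ r.2.2.2 = d.1 ∧ ∃ u v, c.2 = u ++ Sum.inl r.2.1 :: v ∧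
    d.2 = u ++ r.2.2.1 ++ v

def SK.Reach {St : Type} (G : SK St) (c : St × SForm ℕ) : Prop :=
  ReflTransGen G.Step (G.s0, [Sum.inl G.S]) c

def SK.lang {St : Type} (G : SK St) : Set (List ℕ) :=
  {w | ∃ s, G.Reach (s, w.map Sum.inr)}

lemma SK.WF.step_inv {St : Type} {G : SK St} {lf m} (W : G.WF lf m) {c d} (h : G.Step c d)
    (hc : nts c.2 = G.sk c.1) : nts d.2 = G.sk d.1 := by
  obtain ⟨r, hr, h1, h2, u, v, hu, hv⟩ := h
  obtain ⟨l1, l2, e1, e2⟩ := W.rule r hr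
  have hn := W.nds r hr
  rw [← h1, e1, hu] at hc
  rw [e1] at hn
  simp only [nts_append, nts_inl] at hc
  obtain ⟨rfl, rfl⟩ := split_unique hn hc.symm
  rw [hv, ← h2, e2]; simp

lemma SK.WF.reach_inv {St : Type} {G : SK St} {lf m} (W : G.WF lf m) {c} (h : G.Reach c) :
    nts c.2 = G.sk c.1 := by
  induction h with
  | refl => simp [W.start]
  | tail _ h ih => exact W.step_inv h ih

lemma SK.WF.reach_nd {St : Type} {G : SK St} {lf m} (W : G.WF lf m) (hm : 1 ≤ m) {c}
    (h : G.Reach c) : (nts c.2).Nodup ∧ (nts c.2).length ≤ m := by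
  rw [W.reach_inv h]
  cases h with
  | refl => simp [W.start, hm]
  | tail _ h =>
    obtain ⟨r, hr, h1, h2, _⟩ := h
    rw [← h2]; exact ⟨W.ndd r hr, W.lend r hr⟩

/-! ### Skeleton systems to programmed grammars -/

def SK.toPG {St : Type} (G : SK St) : PG ℕ where
  start := G.S
  nLab := G.R.length
  rule := fun i => ((G.R.get i).2.1, (G.R.get i).2.2.1)
  succ := fun i => {j | (G.R.get j).1 = (G.R.get i).2.2.2 ∨ G.sk (G.R.get i).2.2.2 = []}
  fail := fun _ => ∅

lemma SK.toPG_lang {St : Type} {G : SK St} {lf m} (W : G.WF lf m) : G.toPG.lang ⊆ G.lang := by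
  rintro w ⟨r1, r2, h⟩
  have key : ∀ c : SForm ℕ × Fin G.toPG.nLab,
      ReflTransGen G.toPG.PStep ([Sum.inl G.S], r1) c →
      c.1 = [Sum.inl G.S] ∨ (nts c.1 = [] ∧ ∃ s, G.Reach (s, c.1)) ∨
        G.Reach ((G.R.get c.2).1, c.1) := by
    intro c hc
    induction hc with
    | refl => left; rfl
    | @tail b c hb h ih =>
      right
      rcases h with ⟨u, v, e1, e2, e3⟩ | ⟨_, _, h⟩
      swap
      · exact h.elim
      have hR : G.Reach ((G.R.get b.2).1, b.1) := by
        rcases ih with ih | ih | ih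
        · have : G.S = (G.R.get b.2).2.1 := by
            have := e1.symm.trans ih
            have := congrArg nts this
            have h3 : (G.R.get b.2).2.1 ∈ nts (u ++ Sum.inl (G.R.get b.2).2.1 :: v) := by simp
            have h4 : (G.R.get b.2).2.1 ∈ nts [Sum.inl G.S] := this ▸ h3
            exact (by simpa using h4 : _ = _).symm
          rw [W.pS _ (List.get_mem _ _) this.symm, ih]
          exact ReflTransGen.refl
        · rw [e1] at ih; simp at ih
        · exact ih
      have hS : G.Reach ((G.R.get b.2).2.2.2, c.1) :=
        hR.tail ⟨G.R.get b.2, List.get_mem _ _, rfl, rfl, u, v, e1, e2⟩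
      rcases e3 with e3 | e3
      · right; rw [e3]; exact hS
      · left; exact ⟨by rw [W.reach_inv hS]; exact e3, _, hS⟩
  rcases key _ h with h | h | h
  · exact absurd h.symm start_ne_term
  · exact h.2
  · exact ⟨_, h⟩

lemma SK.lang_toPG {St : Type} {G : SK St} {lf m} (W : G.WF lf m) (hm : 1 ≤ m) :
    G.lang ⊆ G.toPG.langB m := by
  rintro w ⟨s, h⟩
  have key : ∀ c, ReflTransGen G.Step c (s, w.map Sum.inr) → nts c.2 = G.sk c.1 →
      c.2 = w.map Sum.inr ∨ ∃ i r2, (G.R.get i).1 = c.1 ∧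
        ReflTransGen (fun p q => G.toPG.PStep p q ∧ ntCount q.1 ≤ m) (c.2, i) 
          (w.map Sum.inr, r2) := by
    intro c hc
    induction hc using ReflTransGen.head_induction_on with
    | refl => intro _; left; rfl
    | @head c d h1 h2 ih =>
      intro hc
      have hd := W.step_inv h1 hc
      obtain ⟨r, hr, e1, e2, u, v, hu, hv⟩ := h1
      obtain ⟨i, rfl⟩ := List.get_of_mem hr
      have hcnt : ntCount d.2 ≤ m := by rw [ntCount_eq, hd, ← e2]; exact W.lend _ hr
      right
      rcases ih hd with ih | ⟨j, r2, ej, ih⟩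
      · refine ⟨i, i, e1, ReflTransGen.single ⟨Or.inl ⟨u, v, hu, ?_, ?_⟩, ?_⟩⟩
        · rw [← ih]; exact hv
        · right; rw [e2, ← hd, ih]; simp
        · rw [← ih]; exact hcnt
      · refine ⟨i, r2, e1, ReflTransGen.head (b := (d.2, j)) ⟨Or.inl ⟨u, v, hu, hv, ?_⟩, hcnt⟩ ih⟩
        left; rw [e2]; exact ej
  rcases key _ h (by simp [W.start]) with h | ⟨i, r2, -, h⟩
  · exact absurd h start_ne_term
  · exact ⟨i, r2, by simpa [ntCount_eq] using hm, h⟩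

lemma PG.langB_sub (G : PG ℕ) (m) : G.langB m ⊆ G.lang := by
  rintro w ⟨r1, r2, -, h⟩
  exact ⟨r1, r2, ReflTransGen.mono (fun _ _ h => h.1) _ _ h⟩

lemma SK.exists_PG {St : Type} {G : SK St} {lf m} (W : G.WF lf m) (hm : 1 ≤ m) :
    ∃ G' : PG ℕ, (lf = true → G'.LamFree) ∧ G'.NoAC ∧ G'.lang = G.lang ∧
      G'.lang ⊆ G'.langB m := by
  refine ⟨G.toPG, fun h i => W.lamf h _ (List.get_mem _ _), fun _ => rfl, ?_, ?_⟩
  · exact (SK.toPG_lang W).antisymm ((SK.lang_toPG W hm).trans (PG.langB_sub _ _))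
  · exact (SK.toPG_lang W).trans (SK.lang_toPG W hm)

/-! ### Controlled systems -/

structure Ctrl (Q : Type) where
  Rl : List (Rule ℕ)
  δ : Q → List ℕ → Rule ℕ → Q → List ℕ → Prop
  q0 : Q
  S : ℕ

def Ctrl.Step {Q : Type} (C : Ctrl Q) (m : ℕ) (c d : Q × SForm ℕ) : Prop :=
  ∃ r ∈ C.Rl, ∃ u v, c.2 = u ++ Sum.inl r.1 :: v ∧ d.2 = u ++ r.2 ++ v ∧
    C.δ c.1 (nts c.2) r d.1 (nts d.2) ∧ ntCount d.2 ≤ m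

def Ctrl.Reach {Q : Type} (C : Ctrl Q) (m : ℕ) (c : Q × SForm ℕ) : Prop :=
  ReflTransGen (C.Step m) (C.q0, [Sum.inl C.S]) c

def Ctrl.lang {Q : Type} (C : Ctrl Q) (m : ℕ) : Set (List ℕ) :=
  {w | ∃ q, C.Reach m (q, w.map Sum.inr)}

lemma finite_lists {α : Type} {A : Set α} (hA : A.Finite) (n : ℕ) :
    {l : List α | l.length ≤ n ∧ ∀ a ∈ l, a ∈ A}.Finite := by
  induction n with
  | zero =>
    refine (Set.finite_singleton ([] : List α)).subset ?_
    rintro l ⟨h, -⟩; simpa using h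
  | succ n ih =>
    refine ((Set.finite_singleton ([] : List α)).union
      ((hA.prod ih).image (fun p => p.1 :: p.2))).subset ?_
    rintro l ⟨h, h2⟩
    cases l with
    | nil => left; rfl
    | cons a l =>
      right
      simp at h h2
      exact ⟨(a, l), ⟨h2.1, h, h2.2⟩, rfl⟩

def prj (e : ℕ) : ℕ := (Nat.unpair e).2

def Ctrl.Sym {Q : Type} (C : Ctrl Q) (m : ℕ) : Set ℕ :=
  {e | e.unpair.1 ≤ 2 * m ∧ prj e ∈ C.S :: C.Rl.flatMap (fun r => nts r.2)}

lemma Ctrl.Sym_finite {Q : Type} (C : Ctrl Q) (m : ℕ) : (C.Sym m).Finite := by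
  refine (((Set.finite_le_nat (2 * m)).prod
    (List.finite_toSet (C.S :: C.Rl.flatMap (fun r => nts r.2)))).image
    (fun p => Nat.pair p.1 p.2)).subset ?_
  rintro e ⟨h1, h2⟩
  exact ⟨(e.unpair.1, e.unpair.2), ⟨h1, h2⟩, by simp⟩

def Ctrl.RS {Q : Type} (C : Ctrl Q) (m : ℕ) : Set (SR (Q × List ℕ)) :=
  {r | (∃ l1 l2, r.1.2 = l1 ++ r.2.1 :: l2 ∧ r.2.2.2.2 = l1 ++ nts r.2.2.1 ++ l2) ∧
    r.1.2.Nodup ∧ r.2.2.2.2.Nodup ∧ r.1.2.length ≤ m ∧ r.2.2.2.2.length ≤ m ∧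
    r.2.1 ∉ r.2.2.2.2 ∧ (r.2.1 = Nat.pair 0 C.S → r.1 = (C.q0, [Nat.pair 0 C.S])) ∧
    (∀ a ∈ r.1.2, a ∈ C.Sym m) ∧ (∀ a ∈ nts r.2.2.1, a ∈ C.Sym m) ∧
    (prj r.2.1, ren prj r.2.2.1) ∈ C.Rl ∧
    C.δ r.1.1 (r.1.2.map prj) (prj r.2.1, ren prj r.2.2.1) r.2.2.2.1 (r.2.2.2.2.map prj)}

lemma Ctrl.RS_finite {Q : Type} [Finite Q] (C : Ctrl Q) (m : ℕ) : (C.RS m).Finite := by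
  have hL := finite_lists (C.Sym_finite m) m
  have hZ : (⋃ r ∈ {r | r ∈ C.Rl}, {z : SForm ℕ | z.length ≤ r.2.length ∧
      ∀ a ∈ z, a ∈ (Sum.inl '' C.Sym m ∪ {a | a ∈ r.2} : Set (Symb ℕ))}).Finite := by
    refine Set.Finite.biUnion (List.finite_toSet C.Rl) fun r _ => ?_
    exact finite_lists (((C.Sym_finite m).image _).union (List.finite_toSet _)) _
  refine (((Set.finite_univ (α := Q)).prod hL).prod ((C.Sym_finite m).prod (hZ.prod
    ((Set.finite_univ (α := Q)).prod hL)))).subset ?_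
  rintro r ⟨⟨l1, l2, e1, e2⟩, h1, h2, h3, h4, h5, h6, h7, h8, h9, h10⟩
  refine ⟨⟨trivial, h3, h7⟩, h7 _ (by rw [e1]; simp), ?_, trivial, h4, ?_⟩
  · simp only [Set.mem_iUnion]
    refine ⟨_, h9, by simp [ren], ?_⟩
    rintro (a | a) ha
    · left; exact ⟨a, h8 a (mem_nts.2 ha), rfl⟩
    · right
      have : Sum.map prj id (Sum.inr a : Symb ℕ) ∈ ren prj r.2.2.1 := List.mem_map_of_mem ha
      exact this
  · intro a ha
    rw [e2] at ha
    simp only [List.mem_append] at ha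
    rcases ha with (ha | ha) | ha
    · exact h7 a (by rw [e1]; simp [ha])
    · exact h8 a ha
    · exact h7 a (by rw [e1]; simp [ha])

noncomputable def Ctrl.toSK {Q : Type} [Finite Q] (C : Ctrl Q) (m : ℕ) : SK (Q × List ℕ) where
  R := (C.RS_finite m).toFinset.toList
  sk := Prod.snd
  s0 := (C.q0, [Nat.pair 0 C.S])
  S := Nat.pair 0 C.S

lemma Ctrl.mem_R {Q : Type} [Finite Q] (C : Ctrl Q) (m : ℕ) (r) :
    r ∈ (C.toSK m).R ↔ r ∈ C.RS m := by
  simp [Ctrl.toSK]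

lemma Ctrl.toSK_WF {Q : Type} [Finite Q] (C : Ctrl Q) (m : ℕ) (lf : Bool)
    (hlf : lf = true → ∀ r ∈ C.Rl, r.2 ≠ []) : (C.toSK m).WF lf m where
  start := rfl
  rule := fun r hr => ((C.mem_R m r).1 hr).1
  nds := fun r hr => ((C.mem_R m r).1 hr).2.1
  ndd := fun r hr => ((C.mem_R m r).1 hr).2.2.1
  lens := fun r hr => ((C.mem_R m r).1 hr).2.2.2.1
  lend := fun r hr => ((C.mem_R m r).1 hr).2.2.2.2.1
  pf := fun r hr => ((C.mem_R m r).1 hr).2.2.2.2.2.1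
  pS := fun r hr => ((C.mem_R m r).1 hr).2.2.2.2.2.2.1
  lamf := fun h r hr e => by
    have := ((C.mem_R m r).1 hr).2.2.2.2.2.2.2.2.2.1
    exact hlf h _ this (by simp [e])

lemma Ctrl.fresh (M : ℕ) (z : SForm ℕ) : ∀ (U : List ℕ), U.length + ntCount z ≤ M →
    ∃ z', ren prj z' = z ∧ (nts z').Nodup ∧ (∀ a ∈ nts z', a ∉ U) ∧
      ∀ e ∈ nts z', 1 ≤ e.unpair.1 ∧ e.unpair.1 ≤ M := by
  induction z with
  | nil => intro U _; exact ⟨[], by simp⟩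
  | cons b z ih =>
    intro U hU
    cases b with
    | inr b =>
      obtain ⟨z', h1, h2, h3, h4⟩ := ih U (by simpa [ntCount_eq] using hU)
      exact ⟨Sum.inr b :: z', by simp [h1], by simpa, by simpa, by simpa⟩
    | inl a =>
      simp only [ntCount_eq, nts_inl, List.length_cons] at hU
      obtain ⟨i, hi1, hi2, hi3⟩ : ∃ i, 1 ≤ i ∧ i ≤ M ∧ Nat.pair i a ∉ U := by
        by_contra! H
        have : ((Finset.Icc 1 M).image (fun i => Nat.pair i a)) ⊆ U.toFinset := by
          intro e he
          simp at he
          obtain ⟨i, ⟨h1, h2⟩, rfl⟩ := he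
          simpa using H i h1 h2
        have := Finset.card_le_card this
        rw [Finset.card_image_of_injective _ (by
          intro i j h; simpa [Nat.pair_eq_pair] using h)] at this
        have h2 := List.toFinset_card_le U
        simp at this
        omega
      obtain ⟨z', h1, h2, h3, h4⟩ := ih (Nat.pair i a :: U) (by
        rw [ntCount_eq]; simp; omega)
      refine ⟨Sum.inl (Nat.pair i a) :: z', by simp [h1, prj], ?_, ?_, ?_⟩
      · simp only [nts_inl, List.nodup_cons]
        exact ⟨fun h => h3 _ h (by simp), h2⟩
      · intro e he
        simp only [nts_inl, List.mem_cons] at he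
        rcases he with rfl | he
        · exact hi3
        · exact fun h => h3 e he (by simp [h])
      · intro e he
        simp only [nts_inl, List.mem_cons] at he
        rcases he with rfl | he
        · simp [hi1, hi2]
        · exact h4 e he

lemma Ctrl.toSK_lang {Q : Type} [Finite Q] (C : Ctrl Q) (m : ℕ) (hm : 1 ≤ m) :
    (C.toSK m).lang = C.lang m := by
  have W := C.toSK_WF m false (by simp)
  apply Set.Subset.antisymm
  · rintro w ⟨s, h⟩
    have key : ∀ c, (C.toSK m).Reach c → C.Reach m (c.1.1, ren prj c.2) := by
      intro c hc
      induction hc with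
      | refl => simp [Ctrl.toSK, prj]; exact ReflTransGen.refl
      | @tail b c hb h ih =>
        refine ih.tail ?_
        have i1 := W.reach_inv hb
        have i2 := W.reach_inv (ReflTransGen.tail hb h)
        obtain ⟨r, hr, e1, e2, u, v, hu, hv⟩ := h
        obtain ⟨-, h1, h2, h3, h4, h5, h6, h7, h8, h9, h10⟩ := (C.mem_R m r).1 hr
        refine ⟨_, h9, ren prj u, ren prj v, by simp [hu], by simp [hv], ?_, ?_⟩
        · simp only [nts_ren, i1, i2, ← e1, ← e2]
          exact h10
        · rw [ntCount_eq, nts_ren, i2, ← e2, List.length_map]; exact h4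
    refine ⟨s.1, ?_⟩
    simpa using key _ h
  · rintro w ⟨q, h⟩
    have key : ∀ c, C.Reach m c → ∃ x', ren prj x' = c.2 ∧
        (c.1 = C.q0 ∧ x' = [Sum.inl (Nat.pair 0 C.S)] ∨ ∀ e ∈ nts x', 1 ≤ e.unpair.1) ∧
        (∀ e ∈ nts x', e ∈ C.Sym m) ∧ (C.toSK m).Reach ((c.1, nts x'), x') := by
      intro c hc
      induction hc with
      | refl =>
        refine ⟨[Sum.inl (Nat.pair 0 C.S)], by simp [prj], Or.inl ⟨rfl, rfl⟩, ?_,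
          ReflTransGen.refl⟩
        simp [Ctrl.Sym, prj]
      | @tail b c hb h ih =>
        obtain ⟨x', h1, h2, h3, h4⟩ := ih
        obtain ⟨r, hr, u, v, hu, hv, hδ, hcnt⟩ := h
        have hnd := W.reach_nd hm h4
        obtain ⟨u', p, v', rfl, rfl, hp, rfl⟩ := ren_eq_split (h1.trans hu)
        simp only [nts_append, nts_inl] at hnd
        have hcnt2 : (nts u').length + (nts r.2).length + (nts v').length ≤ m := by
          rw [hv, ntCount_eq] at hcnt
          simp [nts_ren] at hcnt; omega
        obtain ⟨z', z1, z2, z3, z4⟩ := Ctrl.fresh (2 * m) r.2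
          (nts u' ++ p :: nts v') (by rw [ntCount_eq]; have := hnd.2; omega)
        have zS : ∀ a ∈ nts z', a ∈ C.Sym m := by
          intro a ha
          refine ⟨(z4 a ha).2, ?_⟩
          simp only [List.mem_cons, List.mem_flatMap]
          right
          refine ⟨r, hr, ?_⟩
          rw [← z1, nts_ren]; exact List.mem_map_of_mem ha
        have hlz : (nts z').length = (nts r.2).length := by rw [← z1, nts_ren]; simp
        refine ⟨u' ++ z' ++ v', by simp [z1, hv], Or.inr ?_, ?_, ReflTransGen.tail h4 ?_⟩
        · intro e he
          simp only [nts_append, List.mem_append] at he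
          rcases h2 with ⟨-, h2⟩ | h2
          · have : u' = [] ∧ v' = [] := by
              have := congrArg List.length h2
              simp at this
              constructor <;> apply List.length_eq_zero_iff.1 <;> omega
            obtain ⟨rfl, rfl⟩ := this
            simp at he
            exact (z4 e he).1
          · rcases he with (he | he) | he
            · exact h2 e (by simp [he])
            · exact (z4 e he).1
            · exact h2 e (by simp [he])
        · intro e he
          simp only [nts_append, List.mem_append] at he
          rcases he with (he | he) | he
          · exact h3 e (by simp [he])
          · exact zS e he
          · exact h3 e (by simp [he])
        · refine ⟨((b.1, nts (u' ++ Sum.inl p :: v')), p, z', (c.1, nts (u' ++ z' ++ v'))), ?_,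
            rfl, rfl, u', v', rfl, rfl⟩
          rw [C.mem_R]
          have hr' : (prj p, ren prj z') = r := by rw [hp, z1]
          refine ⟨⟨nts u', nts v', by simp, by simp⟩, by simpa using hnd.1, ?_,
            by simpa using hnd.2, by simp; omega, ?_, ?_, h3, zS, ?_, ?_⟩
          · simp only [nts_append]
            have := hnd.1
            simp only [List.nodup_append, List.nodup_cons, List.mem_cons, List.mem_append] at this z3 ⊢
            refine ⟨⟨this.1, z2, ?_⟩, this.2.1.2, ?_⟩
            · rintro a ha b hb rfl
              exact z3 a hb (Or.inl ha)
            · rintro a ha b hb rfl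
              rcases ha with ha | ha
              · exact this.2.2 a ha a (Or.inr hb) rfl
              · exact z3 a ha (Or.inr (Or.inr hb))
          · simp only [nts_append, List.mem_append]
            have := hnd.1
            simp only [List.nodup_append, List.nodup_cons, List.mem_cons, List.mem_append] at this z3
            rintro ((h | h) | h)
            · exact this.2.2 p h p (Or.inl rfl) rfl
            · exact z3 p h (Or.inr (Or.inl rfl))
            · exact this.2.1.1 h
          · intro e
            simp only at e
            rcases h2 with ⟨q, h2⟩ | h2
            · rw [h2, q]; simp
            · have := h2 p (by simp)
              rw [e] at this; simp at this
          · rw [hr']; exact hr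
          · simp only [hr', ← nts_ren, h1]
            have : ren prj (u' ++ z' ++ v') = c.2 := by simp [z1, hv]
            rw [this]; exact hδ
    obtain ⟨x', h1, -, -, h4⟩ := key _ h
    have := ren_eq_term h1
    subst this
    exact ⟨_, h4⟩

/-! ### Programmed grammars and CD systems to controlled systems -/

def PG.toCtrl (G : PG ℕ) : Ctrl (Option (Fin G.nLab)) where
  Rl := (List.finRange G.nLab).map G.rule
  δ := fun q _ r q' _ => ∃ i j, (q = none ∨ q = some i) ∧ G.rule i = r ∧ q' = some j ∧ j ∈ G.succ i
  q0 := none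
  S := G.start

lemma PG.toCtrl_lang (G : PG ℕ) (hG : G.NoAC) (m : ℕ) (hm : 1 ≤ m) :
    G.langB m = G.toCtrl.lang m := by
  apply Set.Subset.antisymm
  · rintro w ⟨r1, r2, -, h⟩
    have key : ∀ c, ReflTransGen (fun p q => G.PStep p q ∧ ntCount q.1 ≤ m)
        ([Sum.inl G.start], r1) c → (c = ([Sum.inl G.start], r1)) ∨
        G.toCtrl.Reach m (some c.2, c.1) := by
      intro c hc
      induction hc with
      | refl => left; rfl
      | @tail b c hb h ih =>
        right
        obtain ⟨⟨u, v, e1, e2, e3⟩ | ⟨_, _, h⟩, hcnt⟩ := h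
        swap
        · rw [hG] at h; exact h.elim
        have hr : G.rule b.2 ∈ G.toCtrl.Rl := List.mem_map_of_mem (List.mem_finRange _)
        rcases ih with rfl | ih
        · exact ReflTransGen.single ⟨_, hr, u, v, e1, e2,
            ⟨_, _, Or.inl rfl, rfl, rfl, e3⟩, hcnt⟩
        · exact ReflTransGen.tail ih ⟨_, hr, u, v, e1, e2,
            ⟨_, _, Or.inr rfl, rfl, rfl, e3⟩, hcnt⟩
    rcases key _ h with h | h
    · exact absurd (congrArg Prod.fst h).symm start_ne_term
    · exact ⟨_, h⟩
  · rintro w ⟨q, h⟩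
    have key : ∀ c, G.toCtrl.Reach m c → c = (none, [Sum.inl G.start]) ∨
        ∃ r1 r2, c.1 = some r2 ∧ ReflTransGen (fun p q => G.PStep p q ∧ ntCount q.1 ≤ m)
          ([Sum.inl G.start], r1) (c.2, r2) := by
      intro c hc
      induction hc with
      | refl => left; rfl
      | @tail b c hb h ih =>
        right
        obtain ⟨r, hr, u, v, hu, hv, ⟨i, j, h1, h2, h3, h4⟩, hcnt⟩ := h
        subst h2
        rcases ih with rfl | ⟨r1, r2, e, ih⟩
        · exact ⟨i, j, h3, ReflTransGen.single ⟨Or.inl ⟨u, v, hu, hv, h4⟩, hcnt⟩⟩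
        · rcases h1 with h1 | h1
          · rw [e] at h1; simp at h1
          · obtain rfl : r2 = i := by rw [e] at h1; simpa using h1
            exact ⟨r1, j, h3, ih.tail ⟨Or.inl ⟨u, v, hu, hv, h4⟩, hcnt⟩⟩
    rcases key _ h with h | ⟨r1, r2, -, h⟩
    · exact absurd (congrArg Prod.snd h).symm start_ne_term
    · exact ⟨r1, r2, by simpa [ntCount_eq] using hm, h⟩

def Irr (P : List (Rule ℕ)) (x : SForm ℕ) : Prop := ∀ r ∈ P, Sum.inl r.1 ∉ x

lemma irr_iff (P : List (Rule ℕ)) (x : SForm ℕ) : (¬ ∃ z, RStep P x z) ↔ Irr P x := by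
  constructor
  · intro h r hr hx
    obtain ⟨u, v, rfl⟩ := List.append_of_mem hx
    exact h ⟨_, r, hr, u, v, rfl, rfl⟩
  · rintro h ⟨z, r, hr, u, v, rfl, -⟩
    exact h r hr (by simp)

lemma modeOK_cap (f : Mode) : ∃ K, ∀ (P : List (Rule ℕ)) (j : ℕ) (y : SForm ℕ), 
    ∀ K' ≥ K, (modeOK P f j y ↔ modeOK P f (min j K') y) := by
  induction f with
  | eq k => exact ⟨k+1, fun P j y K' hK => by simp only [modeOK]; omega⟩
  | le k => exact ⟨k+1, fun P j y K' hK => by simp only [modeOK]; omega⟩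
  | ge k => exact ⟨k+1, fun P j y K' hK => by simp only [modeOK]; omega⟩
  | star => exact ⟨0, fun P j y K' hK => by simp only [modeOK]⟩
  | t => exact ⟨0, fun P j y K' hK => by simp only [modeOK]⟩
  | conj f g hf hg =>
    obtain ⟨K1, h1⟩ := hf
    obtain ⟨K2, h2⟩ := hg
    refine ⟨max K1 K2, fun P j y K' hK => ?_⟩
    simp only [modeOK]
    rw [h1 P j y K' (by omega), h2 P j y K' (by omega)]

lemma modeOK_nts (f : Mode) (P : List (Rule ℕ)) (j : ℕ) (x y : SForm ℕ) (h : nts x = nts y) :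
    modeOK P f j x ↔ modeOK P f j y := by
  induction f with
  | t =>
    simp only [modeOK]
    rw [irr_iff, irr_iff]
    simp only [Irr, ← mem_nts, h]
  | conj f g hf hg => simp only [modeOK]; rw [hf, hg]
  | _ => simp only [modeOK]

lemma StepsNB.snoc {P : List (Rule ℕ)} {b j x y z} (h : StepsNB P b j x y) (h2 : RStep P y z)
    (h3 : ntCount z ≤ b) : StepsNB P b (j + 1) x z := by
  induction j generalizing x with
  | zero => obtain rfl : x = y := h; exact ⟨z, h2, h3, rfl⟩
  | succ j ih =>
    obtain ⟨t, a1, a2, a3⟩ := h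
    exact ⟨t, a1, a2, ih a3⟩

lemma StepsNB.toN {P : List (Rule ℕ)} {b j x y} (h : StepsNB P b j x y) : StepsN P j x y := by
  induction j generalizing x with
  | zero => exact h
  | succ j ih =>
    obtain ⟨t, a1, a2, a3⟩ := h
    exact ⟨t, a1, ih a3⟩

lemma CDGS.langB_sub (G : CDGS ℕ) (f m) : G.langB f m ⊆ G.lang f := by
  rintro w ⟨-, h⟩
  exact TransGen.mono (fun _ _ ⟨i, j, h1, h2⟩ => ⟨i, j, h1.toN, h2⟩) _ _ h

def CDGS.toCtrl (G : CDGS ℕ) (f : Mode) (K : ℕ) : Ctrl (Option (Fin G.deg × Fin (K + 1))) where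
  Rl := (List.finRange G.deg).flatMap G.comp
  δ := fun q n r q' n' => ∃ i j', q' = some (i, j') ∧ r ∈ G.comp i ∧
    ((∃ j, q = some (i, j) ∧ j'.val = min (j.val + 1) K) ∨
      ((∀ i2 j2, q = some (i2, j2) → modeOK (G.comp i2) f j2.val (n.map Sum.inl)) ∧
        j'.val = min 1 K)) ∧
    (n' = [] → modeOK (G.comp i) f j'.val (n'.map Sum.inl))
  q0 := none
  S := G.start

lemma nts_map_inl (n : List ℕ) : nts (n.map Sum.inl) = n := by
  induction n with
  | nil => rfl
  | cons a n ih => simpa using ih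

lemma CDGS.toCtrl_lang (G : CDGS ℕ) (f : Mode) (K : ℕ) (m : ℕ) (hm : 1 ≤ m)
    (hK : ∀ (P : List (Rule ℕ)) (j : ℕ) (y : SForm ℕ), 
      (modeOK P f j y ↔ modeOK P f (min j K) y)) :
    G.langB f m = (G.toCtrl f K).lang m := by
  have hmode : ∀ P j y, modeOK P f j ((nts y).map Sum.inl) ↔ modeOK P f j y := 
    fun P j y => modeOK_nts f P j _ _ (nts_map_inl _)
  apply Set.Subset.antisymm
  · rintro w ⟨-, h⟩
    -- inner lemma
    have inner : ∀ (i : Fin G.deg) (j : ℕ) (j0 : ℕ) (z y : SForm ℕ), StepsNB (G.comp i) m j z y →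
        modeOK (G.comp i) f (j0 + j) y → ∀ (a : Fin (K+1)), a.val = min j0 K → 
        (G.toCtrl f K).Reach m (some (i, a), z) →
        ∃ a' : Fin (K+1), a'.val = min (j0 + j) K ∧ (G.toCtrl f K).Reach m (some (i, a'), y) := by
      intro i j
      induction j with
      | zero =>
        intro j0 z y h1 _ a ha hR
        obtain rfl : z = y := h1
        exact ⟨a, ha, hR⟩
      | succ j ih =>
        intro j0 z y h1 h2 a ha hR
        obtain ⟨t, ⟨r, hr, u, v, e1, e2⟩, hcnt, h3⟩ := h1
        have hr' : r ∈ (G.toCtrl f K).Rl := 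
          List.mem_flatMap.2 ⟨i, List.mem_finRange _, hr⟩
        have := ih (j0 + 1) t y h3 (by rwa [show j0 + 1 + j = j0 + (j + 1) by omega]) 
          ⟨min (j0 + 1) K, by omega⟩ rfl (ReflTransGen.tail hR ?_)
        · rwa [show j0 + 1 + j = j0 + (j + 1) by omega] at this
        · refine ⟨r, hr', u, v, e1, e2, ⟨i, _, rfl, hr, Or.inl ⟨a, rfl, ?_⟩, ?_⟩, hcnt⟩
          · simp only [ha]; omega
          · intro hn
            cases j with
            | zero =>
              obtain rfl : t = y := h3
              rw [hmode, ← hK]; exact h2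
            | succ j =>
              obtain ⟨t', ⟨r', hr', u', v', e1', e2'⟩, -⟩ := h3
              simp [e1'] at hn
    have key : ∀ x, ReflTransGen (G.ModeStepB f m) [Sum.inl G.start] x →
        ∃ q, (G.toCtrl f K).Reach m (q, x) ∧ 
          (∀ i2 (j2 : Fin (K+1)), q = some (i2, j2) → modeOK (G.comp i2) f j2.val x) := by
      intro x hx
      induction hx with
      | refl => exact ⟨none, ReflTransGen.refl, by simp⟩
      | @tail x y _ h ih =>
        obtain ⟨q, hR, hq⟩ := ih
        obtain ⟨i, j, h1, h2⟩ := h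
        cases j with
        | zero =>
          obtain rfl : x = y := h1
          exact ⟨q, hR, hq⟩
        | succ j =>
          obtain ⟨t, ⟨r, hr, u, v, e1, e2⟩, hcnt, h3⟩ := h1
          have hr' : r ∈ (G.toCtrl f K).Rl := 
            List.mem_flatMap.2 ⟨i, List.mem_finRange _, hr⟩
          have hst : (G.toCtrl f K).Reach m (some (i, ⟨min 1 K, by omega⟩), t) := by
            refine ReflTransGen.tail hR ⟨r, hr', u, v, e1, e2, ⟨i, ⟨min 1 K, by omega⟩, rfl, hr,
              Or.inr ⟨?_, rfl⟩, ?_⟩, hcnt⟩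
            · intro i2 j2 h
              rw [hmode]; exact hq i2 j2 h
            · intro hn
              cases j with
              | zero =>
                obtain rfl : t = y := h3
                rw [hmode, ← hK]; exact h2
              | succ j =>
                obtain ⟨t', ⟨r', hr', u', v', e1', e2'⟩, -⟩ := h3
                simp [e1'] at hn
          obtain ⟨a', ha', hR'⟩ := inner i j 1 t y h3 (by rwa [add_comm]) ⟨min 1 K, by omega⟩ rfl
            hst
          refine ⟨_, hR', ?_⟩
          rintro i2 j2 h
          simp at h
          obtain ⟨rfl, rfl⟩ := h
          rw [ha', ← hK, add_comm]; exact h2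
    obtain ⟨q, hq, -⟩ := key _ h.to_reflTransGen
    exact ⟨q, hq⟩
  · rintro w ⟨q, h⟩
    have key : ∀ c, (G.toCtrl f K).Reach m c → c = (none, [Sum.inl G.start]) ∨
        ∃ i j x0 a, c.1 = some (i, a) ∧ a.val = min j K ∧ 
          ReflTransGen (G.ModeStepB f m) [Sum.inl G.start] x0 ∧ StepsNB (G.comp i) m j x0 c.2 ∧
          (nts c.2 = [] → modeOK (G.comp i) f j c.2) := by
      intro c hc
      induction hc with
      | refl => left; rfl
      | @tail b c hb h ih =>
        right
        obtain ⟨r, hr, u, v, hu, hv, ⟨i, j', h1, h2, h3, h4⟩, hcnt⟩ := h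
        have hs : RStep (G.comp i) b.2 c.2 := ⟨r, h2, u, v, hu, hv⟩
        have h4' : nts c.2 = [] → modeOK (G.comp i) f j'.val c.2 := 
          fun h => (hmode _ _ _).1 (h4 h)
        rcases h3 with ⟨j, e, ej⟩ | ⟨h3, ej⟩
        · rcases ih with rfl | ⟨i', jj, x0, a, ea, eb, ih1, ih2, -⟩
          · simp at e
          · rw [e] at ea
            simp at ea
            obtain ⟨rfl, rfl⟩ := ea
            refine ⟨i, jj + 1, x0, j', h1, by omega, ih1, ih2.snoc hs hcnt, fun h => ?_⟩
            rw [hK, show min (jj + 1) K = j'.val by omega]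
            exact h4' h
        · have h4'' : nts c.2 = [] → modeOK (G.comp i) f 1 c.2 := fun h => by
            rw [hK, ← ej]; exact h4' h
          rcases ih with rfl | ⟨i', jj, x0, a, ea, eb, ih1, ih2, -⟩
          · exact ⟨i, 1, _, j', h1, ej, ReflTransGen.refl, ⟨_, hs, hcnt, rfl⟩, h4''⟩
          · refine ⟨i, 1, b.2, j', h1, ej, ih1.tail ⟨i', jj, ih2, ?_⟩, ⟨_, hs, hcnt, rfl⟩, h4''⟩
            rw [hK, ← eb, ← hmode]
            exact h3 _ _ ea
    rcases key _ h with h | ⟨i, j, x0, a, -, -, h1, h2, h3⟩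
    · exact absurd (congrArg Prod.snd h).symm start_ne_term
    · exact ⟨by simpa [ntCount_eq] using hm, TransGen.tail' h1 ⟨i, j, h2, h3 (by simp)⟩⟩

lemma PG.exists_SK (G : PG ℕ) (lf m) (hm : 1 ≤ m) (hlf : lf = true → G.LamFree) (hG : G.NoAC)
    (hB : G.lang ⊆ G.langB m) :
    ∃ (Q : Type) (_ : Encodable Q) (H : SK Q), H.WF lf m ∧ H.lang = G.lang := by
  refine ⟨_, inferInstance, G.toCtrl.toSK m, G.toCtrl.toSK_WF m lf ?_, ?_⟩
  · intro h r hr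
    obtain ⟨i, -, rfl⟩ := List.mem_map.1 hr
    exact hlf h i
  · rw [Ctrl.toSK_lang _ _ hm, ← PG.toCtrl_lang G hG m hm]
    exact (PG.langB_sub _ _).antisymm hB

lemma CDGS.exists_SK (G : CDGS ℕ) (f lf m) (hm : 1 ≤ m) (hlf : lf = true → G.LamFree)
    (hB : G.lang f ⊆ G.langB f m) :
    ∃ (Q : Type) (_ : Encodable Q) (H : SK Q), H.WF lf m ∧ H.lang = G.lang f := by
  obtain ⟨K, hK⟩ := modeOK_cap f
  refine ⟨_, inferInstance, (G.toCtrl f K).toSK m, (G.toCtrl f K).toSK_WF m lf ?_, ?_⟩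
  · intro h r hr
    obtain ⟨i, -, hi⟩ := List.mem_flatMap.1 hr
    exact hlf h i r hi
  · rw [Ctrl.toSK_lang _ _ hm, ← CDGS.toCtrl_lang G f K m hm (fun P j y => hK P j y K le_rfl)]
    exact (CDGS.langB_sub _ _ _).antisymm hB

/-! ### Deterministic components -/

lemma StepsN.split {P : List (Rule ℕ)} {j : ℕ} {x1 x2 y : SForm ℕ}
    (h : StepsN P j (x1 ++ x2) y) : ∃ j1 j2 y1 y2, j = j1 + j2 ∧ y = y1 ++ y2 ∧
      StepsN P j1 x1 y1 ∧ StepsN P j2 x2 y2 := by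
  induction j generalizing x1 x2 with
  | zero =>
    obtain rfl : x1 ++ x2 = y := h
    exact ⟨0, 0, x1, x2, rfl, rfl, rfl, rfl⟩
  | succ j ih =>
    obtain ⟨t, ⟨r, hr, u, v, e1, rfl⟩, h⟩ := h
    rw [List.append_eq_append_iff] at e1
    rcases e1 with ⟨a, rfl, rfl⟩ | ⟨a, rfl, e⟩
    · rw [show x1 ++ a ++ r.2 ++ v = x1 ++ (a ++ r.2 ++ v) by simp] at h
      obtain ⟨j1, j2, y1, y2, rfl, rfl, h1, h2⟩ := ih h
      exact ⟨j1, j2 + 1, y1, y2, by omega, rfl, h1, _, ⟨r, hr, a, v, rfl, rfl⟩, h2⟩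
    · cases a with
      | nil =>
        simp at e
        subst e
        rw [show u ++ r.2 ++ v = u ++ (r.2 ++ v) by simp] at h
        obtain ⟨j1, j2, y1, y2, rfl, rfl, h1, h2⟩ := ih h
        exact ⟨j1, j2 + 1, y1, y2, by omega, rfl, by simpa using h1, _,
          ⟨r, hr, [], v, rfl, rfl⟩, by simpa using h2⟩
      | cons b a =>
        simp at e
        obtain ⟨rfl, rfl⟩ := e
        rw [show u ++ r.2 ++ (a ++ x2) = (u ++ r.2 ++ a) ++ x2 by simp] at h
        obtain ⟨j1, j2, y1, y2, rfl, rfl, h1, h2⟩ := ih h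
        exact ⟨j1 + 1, j2, y1, y2, by omega, rfl, ⟨_, ⟨r, hr, u, a, rfl, rfl⟩, h1⟩, h2⟩

lemma Irr.append {P : List (Rule ℕ)} {x y : SForm ℕ} : Irr P (x ++ y) ↔ Irr P x ∧ Irr P y := by
  simp only [Irr, List.mem_append, not_or]
  exact ⟨fun h => ⟨fun r hr => (h r hr).1, fun r hr => (h r hr).2⟩,
    fun h r hr => ⟨h.1 r hr, h.2 r hr⟩⟩

lemma Irr.steps {P : List (Rule ℕ)} {x y : SForm ℕ} {j} (h : Irr P x) (hs : StepsN P j x y) :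
    j = 0 ∧ y = x := by
  cases j with
  | zero => exact ⟨rfl, hs.symm⟩
  | succ j =>
    obtain ⟨t, hs, -⟩ := hs
    exact absurd ⟨t, hs⟩ ((irr_iff _ _).2 h)

def Det (P : List (Rule ℕ)) (x : SForm ℕ) (n : ℕ) (z : SForm ℕ) : Prop :=
  ∀ j y, StepsN P j x y → j ≤ n ∧ ((j = n ∨ Irr P y) → y = z)

lemma Det.of_irr {P : List (Rule ℕ)} {x : SForm ℕ} (h : Irr P x) : Det P x 0 x := by
  intro j y hs
  obtain ⟨rfl, rfl⟩ := h.steps hs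
  simp

lemma Det.append {P : List (Rule ℕ)} {x1 x2 z1 z2 : SForm ℕ} {n1 n2}
    (h1 : Det P x1 n1 z1) (h2 : Det P x2 n2 z2) : Det P (x1 ++ x2) (n1 + n2) (z1 ++ z2) := by
  intro j y hs
  obtain ⟨j1, j2, y1, y2, rfl, rfl, s1, s2⟩ := hs.split
  obtain ⟨a1, b1⟩ := h1 _ _ s1
  obtain ⟨a2, b2⟩ := h2 _ _ s2
  refine ⟨by omega, fun h => ?_⟩
  rw [Irr.append] at h
  rw [b1 (by rcases h with h | h; (left; omega); exact Or.inr h.1),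
    b2 (by rcases h with h | h; (left; omega); exact Or.inr h.2)]

lemma Det.single {P : List (Rule ℕ)} {X : ℕ} {w z : SForm ℕ} {n} (hX : ∃ r ∈ P, r.1 = X)
    (hu : ∀ r ∈ P, r.1 = X → r.2 = w) (h : Det P w n z) : Det P [Sum.inl X] (n + 1) z := by
  intro j y hs
  cases j with
  | zero =>
    obtain rfl : [Sum.inl X] = y := hs
    refine ⟨by omega, ?_⟩
    rintro (h | h)
    · omega
    · obtain ⟨r, hr, rfl⟩ := hX
      exact absurd (h r hr) (by simp)
  | succ j =>
    obtain ⟨t, ⟨r, hr, u, v, e1, rfl⟩, hs⟩ := hs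
    have : u = [] ∧ v = [] := by
      have := congrArg List.length e1
      simp at this
      constructor <;> apply List.length_eq_zero_iff.1 <;> omega
    obtain ⟨rfl, rfl⟩ := this
    simp at e1
    have := hu r hr e1.symm
    simp only [this, List.nil_append, List.append_nil] at hs
    obtain ⟨a, b⟩ := h _ _ hs
    exact ⟨by omega, fun h => b (by simpa using h)⟩

lemma StepsNB.trans {P : List (Rule ℕ)} {b i j x y z} (h1 : StepsNB P b i x y)
    (h2 : StepsNB P b j y z) : StepsNB P b (i + j) x z := by
  induction i generalizing x with
  | zero => obtain rfl : x = y := h1; simpa using h2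
  | succ i ih =>
    obtain ⟨t, a1, a2, a3⟩ := h1
    rw [show i + 1 + j = (i + j) + 1 by omega]
    exact ⟨t, a1, a2, ih a3⟩

/-! ### Tagged symbols -/

section tags
variable {St : Type} [Encodable St]

abbrev Tag (St : Type) := St ⊕ SR St

def tg (a : ℕ) (t : Tag St) : ℕ := Encodable.encode (Sum.inl (a, t) : (ℕ × Tag St) ⊕ ℕ)
def ch (St : Type) [Encodable St] (i : ℕ) : ℕ :=
  Encodable.encode (Sum.inr i : (ℕ × Tag St) ⊕ ℕ)

@[simp] lemma tg_inj {a b : ℕ} {t t' : Tag St} : tg a t = tg b t' ↔ a = b ∧ t = t' := by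
  unfold tg
  rw [Encodable.encode_injective.eq_iff]; simp
@[simp] lemma ch_inj {i j : ℕ} : ch St i = ch St j ↔ i = j := by
  unfold ch
  rw [Encodable.encode_injective.eq_iff]; simp
@[simp] lemma tg_ne_ch {a : ℕ} {t : Tag St} {i} : tg a t ≠ ch St i := by
  unfold tg ch
  rw [Encodable.encode_injective.ne_iff]; simp
@[simp] lemma ch_ne_tg {a : ℕ} {t : Tag St} {i} : ch St i ≠ tg a t := tg_ne_ch.symm

def tgf (τ : ℕ → Tag St) (a : ℕ) : ℕ := tg a (τ a)

lemma mem_ren_tgf {τ : ℕ → Tag St} {x : SForm ℕ} {e : ℕ} :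
    Sum.inl e ∈ ren (tgf τ) x ↔ ∃ b ∈ nts x, e = tg b (τ b) := by
  rw [← mem_nts, nts_ren, List.mem_map]
  simp only [tgf, eq_comm]

lemma ch_notin {τ : ℕ → Tag St} {x : SForm ℕ} {i : ℕ} : Sum.inl (ch St i) ∉ ren (tgf τ) x := by
  rw [mem_ren_tgf]; simp

def csym (St : Type) [Encodable St] (X i : ℕ) : ℕ := if i = 0 then X else ch St i

def chain (St : Type) [Encodable St] (k X : ℕ) (Z : SForm ℕ) : List (Rule ℕ) :=
  (List.range k).map fun i => (csym St X i, if i + 1 < k then [Sum.inl (csym St X (i + 1))] else Z)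

lemma csym_inj {a : ℕ} {t : Tag St} {i j} (h : csym St (tg a t) i = csym St (tg a t) j) :
    i = j := by
  unfold csym at h
  split_ifs at h <;> simp_all

lemma mem_chain {k X : ℕ} {Z : SForm ℕ} {r} : r ∈ chain St k X Z ↔
    ∃ i < k, r = (csym St X i, if i + 1 < k then [Sum.inl (csym St X (i + 1))] else Z) := by
  simp only [chain, List.mem_map, List.mem_range, eq_comm]

lemma chain_det {k a : ℕ} {t : Tag St} {Z : SForm ℕ} {P E : List (Rule ℕ)} (hk : 1 ≤ k)
    (hP : P = chain St k (tg a t) Z ++ E)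
    (hE : ∀ r ∈ E, r.1 ≠ tg a t ∧ ∀ i, r.1 ≠ ch St i)
    (hZ : Irr P Z) : Det P [Sum.inl (tg a t)] k Z := by
  have hu : ∀ i < k, ∀ r ∈ P, r.1 = csym St (tg a t) i →
      r.2 = if i + 1 < k then [Sum.inl (csym St (tg a t) (i + 1))] else Z := by
    intro i hi r hr e
    rw [hP, List.mem_append, mem_chain] at hr
    rcases hr with ⟨i', hi', rfl⟩ | hr
    · have := csym_inj e
      subst this; rfl
    · obtain ⟨h1, h2⟩ := hE r hr
      unfold csym at e
      split_ifs at e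
      · exact absurd e h1
      · exact absurd e (h2 _)
  have he : ∀ i < k, ∃ r ∈ P, r.1 = csym St (tg a t) i := by
    intro i hi
    exact ⟨_, by rw [hP, List.mem_append, mem_chain]; exact Or.inl ⟨i, hi, rfl⟩, rfl⟩
  have key : ∀ n i, i + n + 1 = k → Det P [Sum.inl (csym St (tg a t) i)] (n + 1) Z := by
    intro n
    induction n with
    | zero =>
      intro i hi
      refine Det.single (he i (by omega)) (hu i (by omega)) ?_
      rw [if_neg (by omega)]
      exact Det.of_irr hZ
    | succ n ih =>
      intro i hi
      refine Det.single (he i (by omega)) (hu i (by omega)) ?_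
      rw [if_pos (by omega)]
      exact ih (i + 1) (by omega)
  have := key (k - 1) 0 (by omega)
  rwa [show k - 1 + 1 = k by omega] at this

lemma chain_steps {k X b : ℕ} {Z α β : SForm ℕ} {P : List (Rule ℕ)} (hk : 1 ≤ k)
    (hP : ∀ r ∈ chain St k X Z, r ∈ P)
    (h1 : ntCount α + 1 + ntCount β ≤ b) (h2 : ntCount (α ++ Z ++ β) ≤ b) :
    StepsNB P b k (α ++ Sum.inl X :: β) (α ++ Z ++ β) := by
  have key : ∀ i < k, StepsNB P b i (α ++ Sum.inl X :: β) (α ++ Sum.inl (csym St X i) :: β) := by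
    intro i
    induction i with
    | zero => intro _; rfl
    | succ i ih =>
      intro hi
      refine (ih (by omega)).snoc ⟨_, hP _ (mem_chain.2 ⟨i, by omega, rfl⟩), α, β, rfl, ?_⟩ ?_
      · simp [hi]
      · simp only [ntCount_eq, nts_append, nts_inl, List.length_append, List.length_cons] at h1 ⊢
        omega
  have := (key (k - 1) (by omega)).snoc (z := α ++ Z ++ β)
    ⟨_, hP _ (mem_chain.2 ⟨k - 1, by omega, rfl⟩), α, β, rfl, ?_⟩ h2
  · rwa [show k - 1 + 1 = k by omega] at this
  · simp [show ¬ (k - 1 + 1 < k) by omega]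

/-! ### Modes counting steps -/

def cmp1 (G : SK St) (K : ℕ) (r : SR St) : List (Rule ℕ) :=
  chain St (K - (G.sk r.1).length + 1) (tg r.2.1 (Sum.inl r.1))
      (ren (tgf fun _ => Sum.inl r.2.2.2) r.2.2.1) ++
    ((G.sk r.1).filter (fun a => a ≠ r.2.1)).map
      (fun a => (tg a (Sum.inl r.1 : Tag St), [Sum.inl (tg a (Sum.inl r.2.2.2 : Tag St))]))

def CDof (S : ℕ) (L : List (List (Rule ℕ))) : CDGS ℕ where
  deg := L.length
  start := S
  comp := L.get

def G1 (G : SK St) (K : ℕ) : CDGS ℕ :=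
  CDof (tg G.S (Sum.inl G.s0 : Tag St)) (G.R.map (cmp1 G K))

lemma cmp1_irr {G : SK St} {K : ℕ} {r : SR St} {s : St} (hs : s ≠ r.1) (x : SForm ℕ) :
    Irr (cmp1 G K r) (ren (tgf fun _ => Sum.inl s) x) := by
  intro q hq h
  rw [mem_ren_tgf] at h
  obtain ⟨b, -, hb⟩ := h
  simp only [cmp1, List.mem_append, mem_chain, List.mem_map] at hq
  rcases hq with ⟨i, -, rfl⟩ | ⟨a, -, rfl⟩
  · simp only [csym] at hb
    split_ifs at hb
    · simp at hb; exact hs hb.2.symm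
    · simp at hb
  · simp at hb; exact hs hb.2.symm

lemma SK.WF.ne {G : SK St} {lf m} (W : G.WF lf m) {r} (hr : r ∈ G.R) : r.2.2.2 ≠ r.1 := by
  intro h
  have := W.pf r hr
  obtain ⟨l1, l2, e, -⟩ := W.rule r hr
  rw [h, e] at this
  simp at this

lemma cmp1_det_aux {G : SK St} {lf m} (W : G.WF lf m) {K : ℕ} {r : SR St} (hr : r ∈ G.R)
    (u : SForm ℕ) (hu : ∀ a ∈ nts u, a ∈ G.sk r.1 ∧ a ≠ r.2.1) :
    Det (cmp1 G K r) (ren (tgf fun _ => Sum.inl r.1) u) (ntCount u)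
      (ren (tgf fun _ => Sum.inl r.2.2.2) u) := by
  induction u with
  | nil => exact Det.of_irr (by simp [Irr])
  | cons b u ih =>
    cases b with
    | inr b =>
      have := Det.append (P := cmp1 G K r) (Det.of_irr (x := [Sum.inr b]) (by simp [Irr]))
        (ih (by simpa using hu))
      simpa [ntCount_eq] using this
    | inl a =>
      simp only [nts_inl, List.mem_cons, forall_eq_or_imp] at hu
      have h1 : Det (cmp1 G K r) [Sum.inl (tg a (Sum.inl r.1 : Tag St))] (0 + 1)
          [Sum.inl (tg a (Sum.inl r.2.2.2 : Tag St))] := by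
        apply Det.single (w := [Sum.inl (tg a (Sum.inl r.2.2.2 : Tag St))])
        · refine ⟨(tg a (Sum.inl r.1 : Tag St), [Sum.inl (tg a (Sum.inl r.2.2.2 : Tag St))]),
            ?_, rfl⟩
          simp only [cmp1, List.mem_append, List.mem_map, List.mem_filter]
          right
          exact ⟨a, ⟨hu.1.1, by simpa using hu.1.2⟩, rfl⟩
        · intro q hq e
          simp only [cmp1, List.mem_append, mem_chain, List.mem_map] at hq
          rcases hq with ⟨i, -, rfl⟩ | ⟨a', -, rfl⟩
          · simp only [csym] at e
            split_ifs at e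
            · simp at e; exact absurd e.symm hu.1.2
            · simp at e
          · simp at e; subst e; rfl
        · apply Det.of_irr
          have := cmp1_irr (G := G) (K := K) (W.ne hr) [Sum.inl a]
          simpa [tgf] using this
      have := h1.append (ih hu.2)
      simpa [ntCount_eq, tgf, add_comm] using this

lemma nodup_split_ne {u v : SForm ℕ} {p : ℕ} (h : (nts (u ++ Sum.inl p :: v)).Nodup) :
    (∀ a ∈ nts u, a ≠ p) ∧ (∀ a ∈ nts v, a ≠ p) := by
  simp only [nts_append, nts_inl, List.nodup_append, List.nodup_cons, List.mem_cons] at h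
  constructor
  · rintro a ha rfl
    exact h.2.2 a ha a (Or.inl rfl) rfl
  · rintro a ha rfl
    exact h.2.1.1 ha

lemma cmp1_det {G : SK St} {lf m} (W : G.WF lf m) {K : ℕ} (hK : m ≤ K) {r : SR St}
    (hr : r ∈ G.R) (u v : SForm ℕ) (hx : nts (u ++ Sum.inl r.2.1 :: v) = G.sk r.1) :
    Det (cmp1 G K r) (ren (tgf fun _ => Sum.inl r.1) (u ++ Sum.inl r.2.1 :: v)) K
      (ren (tgf fun _ => Sum.inl r.2.2.2) (u ++ r.2.2.1 ++ v)) := by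
  have hnd := W.nds r hr
  have hlen := W.lens r hr
  obtain ⟨n1, n2⟩ := nodup_split_ne (hx ▸ hnd)
  have d1 := cmp1_det_aux W (K := K) hr u
    (fun a ha => ⟨by rw [← hx]; simp [ha], n1 a ha⟩)
  have d2 := cmp1_det_aux W (K := K) hr v
    (fun a ha => ⟨by rw [← hx]; simp [ha], n2 a ha⟩)
  have d3 := chain_det (k := K - (G.sk r.1).length + 1) (a := r.2.1) (t := Sum.inl r.1)
    (Z := ren (tgf fun _ => Sum.inl r.2.2.2) r.2.2.1) (P := cmp1 G K r) (by omega) rfl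
    (by
      intro q hq
      simp only [List.mem_map, List.mem_filter] at hq
      obtain ⟨a, ⟨-, ha⟩, rfl⟩ := hq
      simpa using ha) (cmp1_irr (W.ne hr) _)
  have := d1.append (d3.append d2)
  have hl : ntCount u + (K - (G.sk r.1).length + 1 + ntCount v) = K := by
    rw [← hx] at hlen ⊢
    simp [ntCount_eq] at hlen ⊢; omega
  rw [hl] at this
  simpa [tgf] using this

lemma cmp1_steps_aux {G : SK St} {K : ℕ} {r : SR St} {b : ℕ}
    (u : SForm ℕ) (hu : ∀ a ∈ nts u, a ∈ G.sk r.1 ∧ a ≠ r.2.1) (α β : SForm ℕ)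
    (hb : ntCount α + ntCount u + ntCount β ≤ b) :
    StepsNB (cmp1 G K r) b (ntCount u) (α ++ ren (tgf fun _ => Sum.inl r.1) u ++ β)
      (α ++ ren (tgf fun _ => Sum.inl r.2.2.2) u ++ β) := by
  induction u generalizing α with
  | nil => rfl
  | cons c u ih =>
    cases c with
    | inr c =>
      have := ih (by simpa using hu) (α ++ [Sum.inr c]) (by simpa [ntCount_eq] using hb)
      simpa [ntCount_eq] using this
    | inl a =>
      simp only [nts_inl, List.mem_cons, forall_eq_or_imp] at hu
      have := ih hu.2 (α ++ [Sum.inl (tg a (Sum.inl r.2.2.2 : Tag St))])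
        (by simp [ntCount_eq] at hb ⊢; omega)
      rw [show ntCount (Sum.inl a :: u : SForm ℕ) = ntCount u + 1 by simp [ntCount_eq]]
      refine ⟨α ++ [Sum.inl (tg a (Sum.inl r.2.2.2 : Tag St))] ++
        ren (tgf fun _ => Sum.inl r.1) u ++ β, ?_, ?_, by simpa [tgf] using this⟩
      · refine ⟨(tg a (Sum.inl r.1 : Tag St), [Sum.inl (tg a (Sum.inl r.2.2.2 : Tag St))]), ?_,
          α, ren (tgf fun _ => Sum.inl r.1) u ++ β, by simp [tgf], by simp⟩
        simp only [cmp1, List.mem_append, List.mem_map, List.mem_filter]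
        right
        exact ⟨a, ⟨hu.1.1, by simpa using hu.1.2⟩, rfl⟩
      · simp [ntCount_eq, nts_ren] at hb ⊢; omega

lemma cmp1_steps {G : SK St} {lf m} (W : G.WF lf m) {K : ℕ} (hK : m ≤ K) {r : SR St}
    (hr : r ∈ G.R) (u v : SForm ℕ) (hx : nts (u ++ Sum.inl r.2.1 :: v) = G.sk r.1)
    (hy : nts (u ++ r.2.2.1 ++ v) = G.sk r.2.2.2) :
    StepsNB (cmp1 G K r) m K (ren (tgf fun _ => Sum.inl r.1) (u ++ Sum.inl r.2.1 :: v))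
      (ren (tgf fun _ => Sum.inl r.2.2.2) (u ++ r.2.2.1 ++ v)) := by
  have hnd := W.nds r hr
  have hlen := W.lens r hr
  have hlend := W.lend r hr
  obtain ⟨n1, n2⟩ := nodup_split_ne (hx ▸ hnd)
  rw [← hx] at hlen
  rw [← hy] at hlend
  simp at hlen hlend
  have s1 := cmp1_steps_aux (G := G) (K := K) (r := r) (b := m) u
    (fun a ha => ⟨by rw [← hx]; simp [ha], n1 a ha⟩) []
    (ren (tgf fun _ => Sum.inl r.1) (Sum.inl r.2.1 :: v))
    (by simp [ntCount_eq, nts_ren]; omega)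
  have s2 := cmp1_steps_aux (G := G) (K := K) (r := r) (b := m) v
    (fun a ha => ⟨by rw [← hx]; simp [ha], n2 a ha⟩)
    (ren (tgf fun _ => Sum.inl r.2.2.2) u ++ [Sum.inl (tg r.2.1 (Sum.inl r.1 : Tag St))]) []
    (by simp [ntCount_eq, nts_ren]; omega)
  have s3 := chain_steps (St := St) (k := K - (G.sk r.1).length + 1)
    (X := tg r.2.1 (Sum.inl r.1 : Tag St))
    (Z := ren (tgf fun _ => Sum.inl r.2.2.2) r.2.2.1) (P := cmp1 G K r) (b := m)
    (α := ren (tgf fun _ => Sum.inl r.2.2.2) u) (β := ren (tgf fun _ => Sum.inl r.2.2.2) v)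
    (by omega) (by intro q hq; simp only [cmp1, List.mem_append]; exact Or.inl hq)
    (by simp [ntCount_eq, nts_ren]; omega)
    (by simp [ntCount_eq, nts_ren]; omega)
  have hl : ntCount u + (ntCount v + (K - (G.sk r.1).length + 1)) = K := by
    rw [← hx]
    simp [ntCount_eq]; omega
  suffices H : StepsNB (cmp1 G K r) m (ntCount u + (ntCount v + (K - (G.sk r.1).length + 1)))
      (ren (tgf fun _ => Sum.inl r.1) (u ++ Sum.inl r.2.1 :: v))
      (ren (tgf fun _ => Sum.inl r.2.2.2) (u ++ r.2.2.1 ++ v)) by rwa [hl] at H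
  refine StepsNB.trans (y := ren (tgf fun _ => Sum.inl r.2.2.2) u ++
    ren (tgf fun _ => Sum.inl r.1) (Sum.inl r.2.1 :: v)) ?_ (StepsNB.trans
    (y := ren (tgf fun _ => Sum.inl r.2.2.2) u ++ Sum.inl (tg r.2.1 (Sum.inl r.1 : Tag St)) ::
      ren (tgf fun _ => Sum.inl r.2.2.2) v) ?_ ?_)
  · simpa using s1
  · simpa [tgf] using s2
  · simpa using s3

lemma SK.exists_CD1 {G : SK St} {lf m} (W : G.WF lf m) (hm : 1 ≤ m) (K : ℕ) (hK : m ≤ K) (f : Mode)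
    (h1 : ∀ P j (y : SForm ℕ), modeOK P f j y → K ≤ j)
    (h2 : ∀ P (y : SForm ℕ), modeOK P f K y) :
    ∃ G' : CDGS ℕ, (lf = true → G'.LamFree) ∧ G'.lang f = G.lang ∧
      G'.lang f ⊆ G'.langB f m := by
  have sub1 : (G1 G K).lang f ⊆ G.lang := by
    intro w hw
    have key : ∀ y, ReflTransGen ((G1 G K).ModeStep f) [Sum.inl (G1 G K).start] y →
        ∃ s x, G.Reach (s, x) ∧ y = ren (tgf fun _ => Sum.inl s) x := by
      intro y hy
      induction hy with
      | refl => exact ⟨G.s0, [Sum.inl G.S], ReflTransGen.refl, rfl⟩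
      | @tail b y _ h ih =>
        obtain ⟨s, x, hR, rfl⟩ := ih
        obtain ⟨i, j, hs, hmo⟩ := h
        have hi : (G1 G K).comp i ∈ G.R.map (cmp1 G K) := List.get_mem _ _
        obtain ⟨r, hr, e⟩ := List.mem_map.1 hi
        rw [← e] at hs
        by_cases hsr : s = r.1
        · subst hsr
          have hinv := W.reach_inv hR
          simp only at hinv
          have hp : r.2.1 ∈ nts x := by
            rw [hinv]
            obtain ⟨l1, l2, e, -⟩ := W.rule r hr
            rw [e]; simp
          obtain ⟨u, v, rfl⟩ := List.append_of_mem (mem_nts.1 hp)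
          obtain ⟨a, b⟩ := cmp1_det W hK hr u v hinv j y hs
          have := h1 _ _ _ hmo
          refine ⟨_, _, ReflTransGen.tail hR ⟨r, hr, rfl, rfl, u, v, rfl, rfl⟩,
            b (Or.inl (by omega))⟩
        · exact ⟨s, x, hR, ((cmp1_irr hsr x).steps hs).2⟩
    obtain ⟨s, x, hR, e⟩ := key _ (TransGen.to_reflTransGen hw)
    have := ren_eq_term e.symm
    subst this
    exact ⟨s, hR⟩
  have sub2 : G.lang ⊆ (G1 G K).langB f m := by
    rintro w ⟨s, h⟩
    have key : ∀ c, G.Reach c → ReflTransGen ((G1 G K).ModeStepB f m)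
        [Sum.inl (G1 G K).start] (ren (tgf fun _ => Sum.inl c.1) c.2) := by
      intro c hc
      induction hc with
      | refl => exact ReflTransGen.refl
      | @tail b c hb h ih =>
        refine ih.tail ?_
        have i1 := W.reach_inv hb
        have i2 := W.reach_inv (ReflTransGen.tail hb h)
        obtain ⟨r, hr, e1, e2, u, v, hu, hv⟩ := h
        obtain ⟨i, hi⟩ := List.get_of_mem (List.mem_map_of_mem (f := cmp1 G K) hr)
        refine ⟨i, K, ?_, h2 _ _⟩
        have : (G1 G K).comp i = cmp1 G K r := hi
        rw [this, hu, hv, ← e1, ← e2]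
        apply cmp1_steps W hK hr u v
        · rw [← hu, i1, e1]
        · rw [← hv, i2, e2]
    have := key _ h
    simp only [ren_term] at this
    rcases reflTransGen_iff_eq_or_transGen.1 this with h | h
    · exact absurd h.symm start_ne_term
    · exact ⟨by simpa [ntCount_eq] using hm, h⟩
  refine ⟨G1 G K, ?_, sub1.antisymm (sub2.trans (CDGS.langB_sub _ _ _)), sub1.trans sub2⟩
  intro h i q hq
  have hi : (G1 G K).comp i ∈ G.R.map (cmp1 G K) := List.get_mem _ _
  obtain ⟨r, hr, e⟩ := List.mem_map.1 hi
  rw [← e] at hq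
  simp only [cmp1, List.mem_append, mem_chain, List.mem_map] at hq
  rcases hq with ⟨i, -, rfl⟩ | ⟨a, -, rfl⟩
  · simp only
    split_ifs
    · simp
    · simpa [ren] using W.lamf h r hr
  · simp

/-! ### Terminating modes -/

lemma StepsN.mem_trap {P : List (Rule ℕ)} {j c : ℕ} {x y : SForm ℕ} (hP : ∀ r ∈ P, r.1 ≠ c)
    (h : StepsN P j x y) (hx : Sum.inl c ∈ x) : Sum.inl c ∈ y := by
  induction j generalizing x with
  | zero => obtain rfl : x = y := h; exact hx
  | succ j ih =>
    obtain ⟨t, ⟨r, hr, u, v, rfl, rfl⟩, h⟩ := h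
    apply ih h
    have := hP r hr
    simp only [List.mem_append, List.mem_cons, Sum.inl.injEq] at hx ⊢
    rcases hx with hx | hx | hx
    · exact Or.inl (Or.inl hx)
    · exact absurd hx.symm this
    · exact Or.inr hx

def Pairs (G : SK St) : List (ℕ × Tag St) :=
  G.R.flatMap fun r => (G.sk r.1 ++ G.sk r.2.2.2).flatMap fun b =>
    [(b, Sum.inl r.1), (b, Sum.inl r.2.2.2), (b, Sum.inr r)]

lemma mem_Pairs {G : SK St} {r b t} (hr : r ∈ G.R) (hb : b ∈ G.sk r.1 ∨ b ∈ G.sk r.2.2.2)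
    (ht : t = Sum.inl r.1 ∨ t = Sum.inl r.2.2.2 ∨ t = Sum.inr r) : (b, t) ∈ Pairs G := by
  refine List.mem_flatMap.2 ⟨r, hr, List.mem_flatMap.2 ⟨b, by simpa using hb, ?_⟩⟩
  simpa using ht

open Classical in
noncomputable def cmp2 (G : SK St) (k : ℕ) (ok : Tag St → Prop) (a : ℕ) (t : Tag St)
    (Z : SForm ℕ) : List (Rule ℕ) :=
  chain St k (tg a t) Z ++ ((Pairs G).filter (fun q => ¬ ok q.2 ∧ q ≠ (a, t))).map
    (fun q => (tg q.1 q.2, [Sum.inl (ch St 0)]))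

section c2
variable {G : SK St} {k : ℕ} {ok : Tag St → Prop} {a : ℕ} {t : Tag St} {Z : SForm ℕ}

lemma mem_cmp2 {q} : q ∈ cmp2 G k ok a t Z ↔ q ∈ chain St k (tg a t) Z ∨
    ∃ b t', (b, t') ∈ Pairs G ∧ ¬ ok t' ∧ (b, t') ≠ (a, t) ∧
      q = (tg b t', [Sum.inl (ch St 0)]) := by
  simp only [cmp2, List.mem_append, List.mem_map, List.mem_filter, decide_eq_true_eq]
  constructor
  · rintro (h | ⟨⟨b, t'⟩, ⟨h1, h2, h3⟩, rfl⟩)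
    · exact Or.inl h
    · exact Or.inr ⟨b, t', h1, h2, h3, rfl⟩
  · rintro (h | ⟨b, t', h1, h2, h3, rfl⟩)
    · exact Or.inl h
    · exact Or.inr ⟨(b, t'), ⟨h1, h2, h3⟩, rfl⟩

lemma cmp2_trap : ∀ q ∈ cmp2 G k ok a t Z, q.1 ≠ ch St 0 := by
  intro q hq
  rcases mem_cmp2.1 hq with h | ⟨b, t', -, -, -, rfl⟩
  · obtain ⟨i, -, rfl⟩ := mem_chain.1 h
    simp only [csym]
    split_ifs with h
    · simp
    · simpa using h
  · simp

lemma cmp2_irr {σ : ℕ → Tag St} {x : SForm ℕ}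
    (h : ∀ b ∈ nts x, (b, σ b) ≠ (a, t) ∧ ((b, σ b) ∈ Pairs G → ok (σ b))) :
    Irr (cmp2 G k ok a t Z) (ren (tgf σ) x) := by
  intro q hq hx
  rw [mem_ren_tgf] at hx
  obtain ⟨b, hb, e⟩ := hx
  obtain ⟨h1, h2⟩ := h b hb
  rcases mem_cmp2.1 hq with h | ⟨b', t', h3, h4, -, rfl⟩
  · obtain ⟨i, -, rfl⟩ := mem_chain.1 h
    simp only [csym] at e
    split_ifs at e
    · simp only [tg_inj] at e
      exact h1 (by rw [e.1, e.2])
    · simp at e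
  · simp only [tg_inj] at e
    obtain ⟨rfl, rfl⟩ := e
    exact h4 (h2 h3)

lemma cmp2_sound (hk : 1 ≤ k) (hZ : Irr (cmp2 G k ok a t Z) Z) {τ : ℕ → Tag St} {x y : SForm ℕ}
    {j : ℕ} (hn : (nts x).Nodup) (hs : StepsN (cmp2 G k ok a t Z) j (ren (tgf τ) x) y)
    (hy : Irr (cmp2 G k ok a t Z) y) :
    y = ren (tgf τ) x ∨ Sum.inl (ch St 0) ∈ y ∨ ∃ u v, x = u ++ Sum.inl a :: v ∧ τ a = t ∧
      y = ren (tgf τ) u ++ Z ++ ren (tgf τ) v ∧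
      ∀ b, b ∈ nts u ∨ b ∈ nts v → b ≠ a ∧ ((b, τ b) ∈ Pairs G → ok (τ b)) := by
  by_cases hF : ∃ b ∈ nts x, (b, τ b) ∈ Pairs G ∧ ¬ ok (τ b) ∧ (b, τ b) ≠ (a, t)
  · right; left
    obtain ⟨b, hb, f1, f2, f3⟩ := hF
    obtain ⟨u, v, rfl⟩ := List.append_of_mem (mem_nts.1 hb)
    rw [show ren (tgf τ) (u ++ Sum.inl b :: v) =
      ren (tgf τ) u ++ ([Sum.inl (tg b (τ b))] ++ ren (tgf τ) v) by simp [tgf]] at hs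
    obtain ⟨j1, j2, y1, y2, rfl, rfl, s1, s2⟩ := hs.split
    obtain ⟨j3, j4, y3, y4, rfl, rfl, s3, s4⟩ := s2.split
    rw [Irr.append, Irr.append] at hy
    have d : Det (cmp2 G k ok a t Z) [Sum.inl (tg b (τ b))] (0 + 1) [Sum.inl (ch St 0)] := by
      refine Det.single (w := [Sum.inl (ch St 0)]) ⟨_, mem_cmp2.2 (Or.inr ⟨b, τ b, f1, f2, f3, rfl⟩), rfl⟩
        ?_ (Det.of_irr ?_)
      · intro q hq e
        rcases mem_cmp2.1 hq with h | ⟨b', t', h3, h4, -, rfl⟩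
        · exfalso
          obtain ⟨i, -, rfl⟩ := mem_chain.1 h
          simp only [csym] at e
          split_ifs at e
          · simp only [tg_inj] at e
            exact f3 (Prod.ext e.1.symm e.2.symm)
          · simp at e
        · rfl
      · intro q hq
        have := cmp2_trap q hq
        simpa using this
    rw [(d _ _ s3).2 (Or.inr hy.2.1)]
    simp
  · have hF' : ∀ b ∈ nts x, (b, τ b) ≠ (a, t) → (b, τ b) ∈ Pairs G → ok (τ b) := by
      intro b hb h1 h2
      by_contra h3
      exact hF ⟨b, hb, h2, h3, h1⟩
    by_cases hX : a ∈ nts x ∧ τ a = t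
    · right; right
      obtain ⟨hX, rfl⟩ := hX
      obtain ⟨u, v, rfl⟩ := List.append_of_mem (mem_nts.1 hX)
      obtain ⟨n1, n2⟩ := nodup_split_ne hn
      have hb : ∀ b, b ∈ nts u ∨ b ∈ nts v → b ≠ a ∧ ((b, τ b) ∈ Pairs G → ok (τ b)) := by
        intro b hb
        have : b ≠ a := by
          rcases hb with hb | hb
          · exact n1 b hb
          · exact n2 b hb
        refine ⟨this, hF' b ?_ (by simp [this])⟩
        rcases hb with hb | hb <;> simp [hb]
      refine ⟨u, v, rfl, rfl, ?_, hb⟩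
      have d1 := Det.of_irr (cmp2_irr (G := G) (k := k) (ok := ok) (a := a) (t := τ a) (Z := Z)
        (σ := τ) (x := u)
        (fun b h => ⟨by simp [(hb b (Or.inl h)).1], (hb b (Or.inl h)).2⟩))
      have d2 := Det.of_irr (cmp2_irr (G := G) (k := k) (ok := ok) (a := a) (t := τ a) (Z := Z)
        (σ := τ) (x := v)
        (fun b h => ⟨by simp [(hb b (Or.inr h)).1], (hb b (Or.inr h)).2⟩))
      have d3 := chain_det (k := k) (a := a) (t := τ a) (Z := Z) (P := cmp2 G k ok a (τ a) Z)
        hk rfl (by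
          intro q hq
          simp only [List.mem_map, List.mem_filter, decide_eq_true_eq] at hq
          obtain ⟨⟨b, t'⟩, ⟨-, -, h⟩, rfl⟩ := hq
          simp only [ne_eq, tg_inj, tg_ne_ch, not_false_eq_true, implies_true, and_true]
          rintro ⟨rfl, rfl⟩
          exact h rfl) hZ
      have := (d1.append (d3.append d2)) j y (by simpa [tgf] using hs)
      rw [this.2 (Or.inr hy)]
      simp
    · left
      refine ((cmp2_irr ?_).steps hs).2
      intro b hb
      have : (b, τ b) ≠ (a, t) := by
        intro h
        simp only [Prod.mk.injEq] at h
        obtain ⟨rfl, h⟩ := h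
        exact hX ⟨hb, h⟩
      exact ⟨this, hF' b hb this⟩

lemma cmp2_steps (hk : 1 ≤ k) {m : ℕ} {τ : ℕ → Tag St} {u v : SForm ℕ} (ht : τ a = t)
    (h1 : (nts (u ++ Sum.inl a :: v)).length ≤ m)
    (h2 : (nts u).length + (nts Z).length + (nts v).length ≤ m) :
    StepsNB (cmp2 G k ok a t Z) m k (ren (tgf τ) (u ++ Sum.inl a :: v))
      (ren (tgf τ) u ++ Z ++ ren (tgf τ) v) := by
  have := chain_steps (St := St) (k := k) (X := tg a t) (b := m) (Z := Z) (α := ren (tgf τ) u)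
    (β := ren (tgf τ) v) (P := cmp2 G k ok a t Z) hk (fun q hq => mem_cmp2.2 (Or.inl hq))
    (by simp [ntCount_eq, nts_ren] at h1 ⊢; omega) (by simp [ntCount_eq, nts_ren]; omega)
  subst ht
  simpa [tgf] using this

end c2

noncomputable def swc (G : SK St) (k : ℕ) (t t' : Tag St) (a : ℕ) : List (Rule ℕ) :=
  cmp2 G k (fun q => q = t ∨ q = t') a t [Sum.inl (tg a t')]

noncomputable def fire (G : SK St) (k : ℕ) (r : SR St) : List (Rule ℕ) :=
  cmp2 G k (fun q => q = Sum.inr r) r.2.1 (Sum.inl r.1) (ren (tgf fun _ => Sum.inr r) r.2.2.1)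

noncomputable def comps2 (G : SK St) (k : ℕ) : List (List (Rule ℕ)) :=
  G.R.flatMap fun r => fire G k r ::
    (((G.sk r.1).filter (fun a => a ≠ r.2.1)).map (swc G k (Sum.inl r.1) (Sum.inr r)) ++
      (G.sk r.2.2.2).map (swc G k (Sum.inr r) (Sum.inl r.2.2.2)))

noncomputable def G2 (G : SK St) (k : ℕ) : CDGS ℕ :=
  CDof (tg G.S (Sum.inl G.s0 : Tag St)) (comps2 G k)

lemma mem_comps2 {G : SK St} {k : ℕ} {P} : P ∈ comps2 G k ↔ ∃ r ∈ G.R, P = fire G k r ∨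
    (∃ a ∈ G.sk r.1, a ≠ r.2.1 ∧ P = swc G k (Sum.inl r.1) (Sum.inr r) a) ∨
    (∃ a ∈ G.sk r.2.2.2, P = swc G k (Sum.inr r) (Sum.inl r.2.2.2) a) := by
  simp only [comps2, List.mem_flatMap, List.mem_cons, List.mem_append, List.mem_map,
    List.mem_filter, decide_eq_true_eq, and_assoc, @eq_comm _ _ P]

lemma swc_Z {G : SK St} {k : ℕ} {t t' : Tag St} {a : ℕ} (h : t' ≠ t) :
    Irr (swc G k t t' a) [Sum.inl (tg a t')] := by
  have := cmp2_irr (G := G) (k := k) (ok := fun q => q = t ∨ q = t') (a := a) (t := t)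
    (Z := [Sum.inl (tg a t')]) (σ := fun _ => t') (x := [Sum.inl a]) (by simp [h])
  simp only [ren_inl, ren_nil, tgf] at this
  exact this

lemma fire_irr {G : SK St} {k : ℕ} {r : SR St} (x : SForm ℕ) :
    Irr (fire G k r) (ren (tgf fun _ => Sum.inr r) x) :=
  cmp2_irr (by simp)

def Frm (G : SK St) (cur : SForm ℕ) : Prop :=
  ∃ s x, ∃ τ : ℕ → Tag St, G.Reach (s, x) ∧ cur = ren (tgf τ) x ∧
    ((∀ a ∈ nts x, τ a = Sum.inl s) ∨
      ∃ r ∈ G.R, (∀ a ∈ nts x, τ a = Sum.inl s ∨ τ a = Sum.inr r) ∧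
        ((r.1 = s ∧ τ r.2.1 ≠ Sum.inr r) ∨ r.2.2.2 = s))

lemma ren_upd {τ : ℕ → Tag St} {u v : SForm ℕ} {a : ℕ} {t : Tag St}
    (h : ∀ b, b ∈ nts u ∨ b ∈ nts v → b ≠ a) :
    ren (tgf τ) u ++ [Sum.inl (tg a t)] ++ ren (tgf τ) v =
      ren (tgf (Function.update τ a t)) (u ++ Sum.inl a :: v) := by
  have e1 : ren (tgf τ) u = ren (tgf (Function.update τ a t)) u :=
    ren_congr fun b hb => by simp [tgf, h b (Or.inl hb)]
  have e2 : ren (tgf τ) v = ren (tgf (Function.update τ a t)) v :=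
    ren_congr fun b hb => by simp [tgf, h b (Or.inr hb)]
  rw [e1, e2]
  simp [tgf]

lemma Frm.step {G : SK St} {lf m} (W : G.WF lf m) (hm : 1 ≤ m) {k : ℕ} (hk : 1 ≤ k)
    {P} (hP : P ∈ comps2 G k) {cur y : SForm ℕ} {j} (h : Frm G cur) (hs : StepsN P j cur y)
    (hy : Irr P y) : Frm G y ∨ Sum.inl (ch St 0) ∈ y := by
  obtain ⟨s, x, τ, hR, rfl, hτ⟩ := id h
  have hn := (W.reach_nd hm hR).1
  have hsk : nts x = G.sk s := W.reach_inv hR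
  simp only at hn
  have hpair : ∀ r ∈ G.R, (∀ a ∈ nts x, τ a = Sum.inl s ∨ τ a = Sum.inr r) →
      (r.1 = s ∨ r.2.2.2 = s) → ∀ a ∈ nts x, (a, τ a) ∈ Pairs G := by
    intro r hr h1 h2 a ha
    rw [hsk] at ha
    refine mem_Pairs hr ?_ ?_
    · rcases h2 with rfl | rfl
      · exact Or.inl ha
      · exact Or.inr ha
    · rcases h1 a (hsk ▸ ha) with e | e <;> rw [e]
      · rcases h2 with rfl | rfl <;> simp
      · simp
  obtain ⟨r, hr, rfl | ⟨a, ha, hap, rfl⟩ | ⟨a, ha, rfl⟩⟩ := mem_comps2.1 hP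
  · -- fire
    rcases cmp2_sound hk (fire_irr _) hn hs hy with e | e | ⟨u, v, rfl, ht, rfl, hb⟩
    · left; rw [e]; exact h
    · right; exact e
    · left
      have hs : r.1 = s ∧ ∀ a ∈ nts (u ++ Sum.inl r.2.1 :: v), (a, τ a) ∈ Pairs G := by
        rcases hτ with hτ | ⟨r1, hr1, hτ, hc⟩
        · have : r.1 = s := by
            have := hτ r.2.1 (by simp)
            rw [ht] at this; simpa using this
          exact ⟨this, hpair r hr (fun a ha => Or.inl (hτ a ha)) (Or.inl this)⟩
        · have : r.1 = s := by
            have := hτ r.2.1 (by simp)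
            rw [ht] at this; simpa using this
          exact ⟨this, hpair r1 hr1 hτ (hc.imp_left And.left)⟩
      obtain ⟨rfl, hpr⟩ := hs
      refine ⟨r.2.2.2, u ++ r.2.2.1 ++ v, fun _ => Sum.inr r,
        ReflTransGen.tail hR ⟨r, hr, rfl, rfl, u, v, rfl, rfl⟩, ?_,
        Or.inr ⟨r, hr, fun _ _ => Or.inr rfl, Or.inr rfl⟩⟩
      rw [ren_append, ren_append]
      have e : ∀ b, b ∈ nts u ∨ b ∈ nts v → τ b = Sum.inr r := by
        intro b h
        refine (hb b h).2 (hpr b ?_)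
        rcases h with h | h <;> simp [h]
      congr 1
      · congr 1
        apply ren_congr
        intro b h
        simp [tgf, e b (Or.inl h)]
      · apply ren_congr
        intro b h
        simp [tgf, e b (Or.inr h)]
  · -- mark
    rcases cmp2_sound hk (swc_Z (by simp)) hn hs hy with e | e | ⟨u, v, rfl, ht, rfl, hb⟩
    · left; rw [e]; exact h
    · right; exact e
    · left
      rw [ren_upd (fun b h => (hb b h).1)]
      have hs : r.1 = s ∧ (∀ b ∈ nts (u ++ Sum.inl a :: v), (b, τ b) ∈ Pairs G) ∧
          τ r.2.1 ≠ Sum.inr r := by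
        have hp : r.1 = s → r.2.1 ∈ nts (u ++ Sum.inl a :: v) := by
          rintro rfl
          obtain ⟨l1, l2, e, -⟩ := W.rule r hr
          rw [hsk, e]; simp
        rcases hτ with hτ | ⟨r1, hr1, hτ, hc⟩
        · have : r.1 = s := by
            have := hτ a (by simp)
            rw [ht] at this; simpa using this
          refine ⟨this, hpair r hr (fun a ha => Or.inl (hτ a ha)) (Or.inl this), ?_⟩
          rw [hτ _ (hp this)]; simp
        · have : r.1 = s := by
            have := hτ a (by simp)
            rw [ht] at this; simpa using this
          refine ⟨this, hpair r1 hr1 hτ (hc.imp_left And.left), ?_⟩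
          intro h
          rcases hτ _ (hp this) with e | e
          · rw [e] at h; simp at h
          · rw [e] at h
            simp only [Sum.inr.injEq] at h
            subst h
            rcases hc with hc | hc
            · exact hc.2 e
            · exact W.ne hr1 (hc.trans this.symm)
      obtain ⟨rfl, hpr, hpt⟩ := hs
      refine ⟨r.1, _, _, hR, rfl, Or.inr ⟨r, hr, ?_, Or.inl ⟨rfl, ?_⟩⟩⟩
      · intro b h
        by_cases hba : b = a
        · subst hba; simp
        · rw [Function.update_of_ne hba]
          exact (hb b (by simpa [hba] using h)).2 (hpr b h)
      · rw [Function.update_of_ne hap.symm]; exact hpt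
  · -- unmark
    rcases cmp2_sound hk (swc_Z (by simp)) hn hs hy with e | e | ⟨u, v, rfl, ht, rfl, hb⟩
    · left; rw [e]; exact h
    · right; exact e
    · left
      rw [ren_upd (fun b h => (hb b h).1)]
      rcases hτ with hτ | ⟨r1, hr1, hτ, hc⟩
      · have := hτ a (by simp)
        rw [ht] at this; simp at this
      · have : r = r1 := by
          have := hτ a (by simp)
          rw [ht] at this; simpa using this
        subst this
        have hpr := hpair r hr hτ (hc.imp_left And.left)
        rcases hc with ⟨rfl, hc⟩ | rfl
        · exfalso
          have hp : r.2.1 ∈ nts (u ++ Sum.inl a :: v) := by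
            obtain ⟨l1, l2, e, -⟩ := W.rule r hr
            rw [hsk, e]; simp
          have hpa : r.2.1 ≠ a := by
            rintro e
            rw [e] at hc; exact hc ht
          have h1 := (hb _ (by simpa [hpa] using hp)).2 (hpr _ hp)
          rcases h1 with h1 | h1
          · exact hc h1
          · rcases hτ _ hp with h2 | h2
            · rw [h2] at h1
              simp only [Sum.inl.injEq] at h1
              exact W.ne hr h1.symm
            · exact hc h2
        · refine ⟨r.2.2.2, _, _, hR, rfl, Or.inr ⟨r, hr, ?_, Or.inr rfl⟩⟩
          intro b h
          by_cases hba : b = a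
          · subst hba; simp
          · rw [Function.update_of_ne hba]
            exact hτ b h

lemma sw_loop {G : SK St} {k m : ℕ} (hk : 1 ≤ k) {f : Mode}
    (h2 : ∀ P (y : SForm ℕ), Irr P y → modeOK P f k y) {t t' : Tag St} (ht : t' ≠ t)
    {x : SForm ℕ} (hn : (nts x).Nodup) (hl : (nts x).length ≤ m) (M : List ℕ)
    (hM : ∀ a ∈ M, a ∈ nts x ∧ swc G k t t' a ∈ comps2 G k) (hMn : M.Nodup) :
    ReflTransGen ((G2 G k).ModeStepB f m) (ren (tgf fun _ => t) x)
      (ren (tgf fun b => if b ∈ M then t' else t) x) := by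
  induction M with
  | nil => simpa using ReflTransGen.refl
  | cons a M ih =>
    have ih := ih (fun b hb => hM b (by simp [hb])) (List.nodup_cons.1 hMn).2
    refine ih.tail ?_
    have haM := (List.nodup_cons.1 hMn).1
    obtain ⟨ha, hc⟩ := hM a (by simp)
    obtain ⟨i, hi⟩ := List.get_of_mem hc
    obtain ⟨u, v, rfl⟩ := List.append_of_mem (mem_nts.1 ha)
    obtain ⟨n1, n2⟩ := nodup_split_ne hn
    have hne : ∀ b, b ∈ nts u ∨ b ∈ nts v → b ≠ a := by
      rintro b (hb | hb)
      · exact n1 b hb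
      · exact n2 b hb
    have e : (G2 G k).comp i = swc G k t t' a := hi
    have e2 : ren (tgf fun b => if b ∈ a :: M then t' else t) (u ++ Sum.inl a :: v) =
        ren (tgf fun b => if b ∈ M then t' else t) u ++ [Sum.inl (tg a t')] ++
        ren (tgf fun b => if b ∈ M then t' else t) v := by
      rw [ren_upd hne]
      apply ren_congr
      intro b _
      simp only [tgf, tg_inj, true_and]
      by_cases hba : b = a
      · subst hba; simp
      · simp [hba]
    refine ⟨i, k, ?_, ?_⟩
    · rw [e, e2]
      refine cmp2_steps hk (by simp [haM]) hl ?_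
      simp at hl ⊢; omega
    · apply h2
      rw [e]
      apply cmp2_irr
      intro b _
      constructor
      · intro h
        simp only [Prod.mk.injEq] at h
        obtain ⟨rfl, h⟩ := h
        simp at h; exact ht h
      · intro _
        split_ifs
        · exact Or.inr rfl
        · exact Or.inl rfl

lemma SK.exists_CD2 {G : SK St} {lf m} (W : G.WF lf m) (hm : 1 ≤ m) (k : ℕ) (hk : 1 ≤ k) (f : Mode)
    (h1 : ∀ P j (y : SForm ℕ), modeOK P f j y → Irr P y)
    (h2 : ∀ P (y : SForm ℕ), Irr P y → modeOK P f k y) :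
    ∃ G' : CDGS ℕ, (lf = true → G'.LamFree) ∧ G'.lang f = G.lang ∧
      G'.lang f ⊆ G'.langB f m := by
  have sub1 : (G2 G k).lang f ⊆ G.lang := by
    intro w hw
    have key : ∀ y, ReflTransGen ((G2 G k).ModeStep f) [Sum.inl (G2 G k).start] y →
        Frm G y ∨ Sum.inl (ch St 0) ∈ y := by
      intro y hy
      induction hy with
      | refl =>
        exact Or.inl ⟨G.s0, [Sum.inl G.S], fun _ => Sum.inl G.s0, ReflTransGen.refl, rfl,
          Or.inl fun _ _ => rfl⟩
      | @tail b y _ h ih =>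
        obtain ⟨i, j, hs, hmo⟩ := h
        have hi : (G2 G k).comp i ∈ comps2 G k := List.get_mem _ _
        rcases ih with ih | ih
        · exact ih.step W hm hk hi hs (h1 _ _ _ hmo)
        · right
          refine hs.mem_trap ?_ ih
          obtain ⟨r, hr, e | ⟨a, ha, hap, e⟩ | ⟨a, ha, e⟩⟩ := mem_comps2.1 hi <;> rw [e] <;>
            exact cmp2_trap
    rcases key _ (TransGen.to_reflTransGen hw) with ⟨s, x, τ, hR, e, -⟩ | h
    · have := ren_eq_term e.symm
      subst this
      exact ⟨s, hR⟩
    · simp at h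
  have sub2 : G.lang ⊆ (G2 G k).langB f m := by
    rintro w ⟨s, h⟩
    have key : ∀ c, G.Reach c → ReflTransGen ((G2 G k).ModeStepB f m)
        [Sum.inl (G2 G k).start] (ren (tgf fun _ => Sum.inl c.1) c.2) := by
      intro c hc
      induction hc with
      | refl => exact ReflTransGen.refl
      | @tail b c hb h ih =>
        refine ih.trans ?_
        have i1 := W.reach_inv hb
        have i2 := W.reach_inv (ReflTransGen.tail hb h)
        obtain ⟨n1, l1⟩ := W.reach_nd hm hb
        obtain ⟨n2, l2⟩ := W.reach_nd hm (ReflTransGen.tail hb h)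
        obtain ⟨r, hr, e1, e2, u, v, hu, hv⟩ := h
        obtain ⟨bs, bx⟩ := b
        obtain ⟨cs, cx⟩ := c
        simp only at *
        subst e1 e2 hu hv
        have st1 := sw_loop (G := G) hk h2 (t := Sum.inl r.1) (t' := Sum.inr r) (by simp) n1 l1
          ((nts (u ++ Sum.inl r.2.1 :: v)).filter (fun a => a ≠ r.2.1))
          (by
            intro a ha
            simp only [List.mem_filter, decide_eq_true_eq] at ha
            exact ⟨ha.1, mem_comps2.2 ⟨r, hr, Or.inr (Or.inl ⟨a, i1 ▸ ha.1, ha.2, rfl⟩)⟩⟩)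
          (n1.filter _)
        have st3 := sw_loop (G := G) hk h2 (t := Sum.inr r) (t' := Sum.inl r.2.2.2) (by simp) n2 l2
          (nts (u ++ r.2.2.1 ++ v))
          (by
            intro a ha
            exact ⟨ha, mem_comps2.2 ⟨r, hr, Or.inr (Or.inr ⟨a, i2 ▸ ha, rfl⟩)⟩⟩) n2
        rw [ren_congr (g := tgf fun b => if b ∈ nts (u ++ r.2.2.1 ++ v) then Sum.inl r.2.2.2
          else Sum.inr r) (h := tgf fun _ => Sum.inl r.2.2.2)
          (fun a ha => by simp only [tgf, if_pos ha])] at st3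
        refine (st1.tail ?_).trans st3
        obtain ⟨i, hi⟩ := List.get_of_mem (mem_comps2.2 ⟨r, hr, Or.inl rfl⟩ :
          fire G k r ∈ comps2 G k)
        have e : (G2 G k).comp i = fire G k r := hi
        refine ⟨i, k, ?_, ?_⟩
        · rw [e]
          obtain ⟨m1, m2⟩ := nodup_split_ne n1
          have := cmp2_steps (G := G) (k := k) (ok := fun q => q = Sum.inr r) (a := r.2.1)
            (t := Sum.inl r.1) (Z := ren (tgf fun _ => Sum.inr r) r.2.2.1) hk (m := m)
            (τ := fun b => if b ∈ (nts (u ++ Sum.inl r.2.1 :: v)).filter (fun a => a ≠ r.2.1)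
              then Sum.inr r else Sum.inl r.1) (u := u) (v := v) (by simp) l1
            (by simp [nts_ren] at l2 ⊢; omega)
          have e1 := ren_congr (g := tgf fun b => if b ∈ (nts (u ++ Sum.inl r.2.1 :: v)).filter
            (fun a => a ≠ r.2.1) then Sum.inr r else Sum.inl r.1) (h := tgf fun _ => Sum.inr r)
            (x := u) (fun b hb => by simp [tgf, hb, m1 b hb])
          have e2 := ren_congr (g := tgf fun b => if b ∈ (nts (u ++ Sum.inl r.2.1 :: v)).filter
            (fun a => a ≠ r.2.1) then Sum.inr r else Sum.inl r.1) (h := tgf fun _ => Sum.inr r)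
            (x := v) (fun b hb => by simp [tgf, hb, m2 b hb])
          rw [e1, e2, ← ren_append, ← ren_append] at this
          exact this
        · apply h2
          rw [e]
          exact fire_irr _
    have := key _ h
    simp only [ren_term] at this
    rcases reflTransGen_iff_eq_or_transGen.1 this with h | h
    · exact absurd h.symm start_ne_term
    · exact ⟨by simpa [ntCount_eq] using hm, h⟩
  refine ⟨G2 G k, ?_, sub1.antisymm (sub2.trans (CDGS.langB_sub _ _ _)), sub1.trans sub2⟩
  intro h i q hq
  have hi : (G2 G k).comp i ∈ comps2 G k := List.get_mem _ _
  have gen : ∀ ok a t Z, Z ≠ [] → q ∈ cmp2 G k ok a t Z → q.2 ≠ [] := by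
    intro ok a t Z hZ hq
    rcases mem_cmp2.1 hq with h | ⟨b, t', -, -, -, rfl⟩
    · obtain ⟨i, -, rfl⟩ := mem_chain.1 h
      simp only
      split_ifs
      · simp
      · exact hZ
    · simp
  obtain ⟨r, hr, e | ⟨a, ha, hap, e⟩ | ⟨a, ha, e⟩⟩ := mem_comps2.1 hi <;> rw [e] at hq
  · exact gen _ _ _ _ (by simpa [ren] using W.lamf h r hr) hq
  · exact gen _ _ _ _ (by simp) hq
  · exact gen _ _ _ _ (by simp) hq

end tags
end aux
/-- Let m ∈ ℕ (positive) and let f be one of the modes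
t; =k'' or ≥k'' with k'' ≥ m; (≥k''∧≤k') with k' ≥ k'' ≥ m; or (t∧=k), (t∧≤k),
(t∧≥k) with arbitrary k ∈ ℕ. Then L_m(P, CF[−λ]) = L_m(CD_∞, CF[−λ], f),
both with and without erasing rules. -/
theorem stmt13 (lf : Bool) (m : ℕ) (hm : 1 ≤ m) (f : Mode)
    (hf : f = Mode.t ∨
      (∃ k'' : ℕ, m ≤ k'' ∧ (f = Mode.eq k'' ∨ f = Mode.ge k'')) ∨
      (∃ k' k'' : ℕ, m ≤ k'' ∧ k'' ≤ k' ∧ f = Mode.conj (Mode.ge k'') (Mode.le k')) ∨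
      (∃ k : ℕ, 1 ≤ k ∧ (f = Mode.conj Mode.t (Mode.eq k) ∨
        f = Mode.conj Mode.t (Mode.le k) ∨ f = Mode.conj Mode.t (Mode.ge k)))) :
    PFamInd ℕ lf false m = CDFamIndInf ℕ lf f m := by
  ext L
  constructor
  · rintro ⟨G, hlf, hac, hE, hB⟩
    obtain ⟨Q, _, H, W, hL⟩ := PG.exists_SK G lf m hm hlf (hac rfl) hB
    suffices hh : ∃ G' : CDGS ℕ, (lf = true → G'.LamFree) ∧ G'.lang f = H.lang ∧
        G'.lang f ⊆ G'.langB f m by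
      obtain ⟨G', a1, a2, a3⟩ := hh
      exact ⟨G', a1, by rw [a2, hL]; exact hE, a3⟩
    rcases hf with rfl | ⟨k, hk, rfl | rfl⟩ | ⟨k', k, hk, hkk, rfl⟩ |
      ⟨k, hk, rfl | rfl | rfl⟩
    · exact SK.exists_CD2 W hm 1 le_rfl _ (fun P j y h => (irr_iff _ _).1 h)
        (fun P y h => (irr_iff _ _).2 h)
    · exact SK.exists_CD1 W hm k hk _ (fun P j y h => (show j = k from h).ge) (fun P y => rfl)
    · exact SK.exists_CD1 W hm k hk _ (fun P j y h => h) (fun P y => le_refl k)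
    · exact SK.exists_CD1 W hm k hk _ (fun P j y h => h.1) (fun P y => ⟨le_refl k, hkk⟩)
    · exact SK.exists_CD2 W hm k hk _ (fun P j y h => (irr_iff _ _).1 h.1)
        (fun P y h => ⟨(irr_iff _ _).2 h, rfl⟩)
    · exact SK.exists_CD2 W hm k hk _ (fun P j y h => (irr_iff _ _).1 h.1)
        (fun P y h => ⟨(irr_iff _ _).2 h, le_refl k⟩)
    · exact SK.exists_CD2 W hm k hk _ (fun P j y h => (irr_iff _ _).1 h.1)
        (fun P y h => ⟨(irr_iff _ _).2 h, le_refl k⟩)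
  · rintro ⟨G, hlf, hE, hB⟩
    obtain ⟨Q, _, H, W, hL⟩ := CDGS.exists_SK G f lf m hm hlf hB
    obtain ⟨G', a1, a2, a3, a4⟩ := SK.exists_PG W hm
    exact ⟨G', a1, fun _ => a2, by rw [a3, hL]; exact hE, a4⟩

end CDHybrid
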